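/- Let k > n be positive integers and let Ω ⊆ ℝ^k be open. Let f : Ω → ℝ^{2n+1} be locally integrable with a locally integrable weak derivative Df : Ω → L(ℝ^k, ℝ^{2n+1}) (i.e. for every smooth compactly supported φ : Ω → ℝ and every i ∈ {1,…,k}, ∫_Ω f(x) ∂φ/∂x_i(x) dx = −∫_Ω Df(x)(e_i) φ(x) dx), satisfying the weak contact equation: for Lebesgue-almost every x ∈ Ω the image of Df(x) is contained in ker α(f(x)). Assume in addition the Lusin condition: for every Z ⊆ Ω of Lebesgue measure zero, the set f(Z) has k-dimensional Hausdorff measure zero with respect to d_K. Then f(Ω) has k-dimensional Hausdorff measure zero with respect to d_K. -/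

import Mathlib

open MeasureTheory Metric Set
open scoped ENNReal NNReal

noncomputable section

abbrev Heis (n : ℕ) := EuclideanSpace ℝ (Fin (2*n+1))
abbrev Horiz (n : ℕ) := EuclideanSpace ℝ (Fin (2*n))

def xIdx (n : ℕ) (j : Fin n) : Fin (2*n+1) := ⟨2*j.1, by have := j.2; omega⟩
def yIdx (n : ℕ) (j : Fin n) : Fin (2*n+1) := ⟨2*j.1+1, by have := j.2; omega⟩
def tIdx (n : ℕ) : Fin (2*n+1) := ⟨2*n, by omega⟩
def xIdx2 (n : ℕ) (j : Fin n) : Fin (2*n) := ⟨2*j.1, by have := j.2; omega⟩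
def yIdx2 (n : ℕ) (j : Fin n) : Fin (2*n) := ⟨2*j.1+1, by have := j.2; omega⟩

/-- The Korányi distance on the Heisenberg group `ℍ^n = ℝ^{2n+1}`. -/
def dK (n : ℕ) (p q : Heis n) : ℝ :=
  ((∑ j : Fin n, ((p (xIdx n j) - q (xIdx n j))^2 + (p (yIdx n j) - q (yIdx n j))^2))^2
    + (p (tIdx n) - q (tIdx n)
        + 2 * ∑ j : Fin n, (q (xIdx n j) * p (yIdx n j) - p (xIdx n j) * q (yIdx n j)))^2)
    ^ ((1:ℝ)/4)

/-- The kernel of the standard contact form `α = dt + 2∑ (x_j dy_j − y_j dx_j)` at `p`. -/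
def kerAlpha (n : ℕ) (p : Heis n) : Set (Heis n) :=
  {v | v (tIdx n)
    + 2 * ∑ j : Fin n, (p (xIdx n j) * v (yIdx n j) - p (yIdx n j) * v (xIdx n j)) = 0}

/-- The standard symplectic form on `ℝ^{2n}`. -/
def omegaF (n : ℕ) (v w : Horiz n) : ℝ :=
  ∑ j : Fin n, (v (xIdx2 n j) * w (yIdx2 n j) - v (yIdx2 n j) * w (xIdx2 n j))

/-- The projection `π : ℝ^{2n+1} → ℝ^{2n}` forgetting the `t`-coordinate. -/
def piH (n : ℕ) (p : Heis n) : Horiz n :=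
  (EuclideanSpace.equiv (Fin (2*n)) ℝ).symm (fun i => p ⟨i.1, by have := i.2; omega⟩)

/-- Diameter of a set with respect to the Korányi distance, as an extended real. -/
def kDiam (n : ℕ) (U : Set (Heis n)) : ℝ≥0∞ :=
  ⨆ p ∈ U, ⨆ q ∈ U, ENNReal.ofReal (dK n p q)

/-- `S` is null for the `k`-dimensional Hausdorff measure built from the Korányi
distance: its `k`-dimensional Hausdorff content is arbitrarily small. -/
def IsHausdorffNullK (n k : ℕ) (S : Set (Heis n)) : Prop :=
  ∀ ε : ℝ≥0∞, 0 < ε → ∃ U : ℕ → Set (Heis n),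
    (S ⊆ ⋃ i, U i) ∧ ∑' i, (kDiam n (U i)) ^ k < ε

/-- `f` is Lipschitz on `E` as a map into `(ℝ^{2n+1}, d_K)`. -/
def LipschitzOnK (n : ℕ) {k : ℕ} (f : EuclideanSpace ℝ (Fin k) → Heis n)
    (E : Set (EuclideanSpace ℝ (Fin k))) : Prop :=
  ∃ L : ℝ, 0 ≤ L ∧ ∀ x ∈ E, ∀ y ∈ E, dK n (f x) (f y) ≤ L * dist x y

end
/-- `Df` is the weak (distributional) derivative of `f` on `Ω`: integration by parts
against smooth compactly supported test functions holds in every coordinate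
direction. -/
def IsWeakFDerivOn {k m : ℕ} (Ω : Set (EuclideanSpace ℝ (Fin k)))
    (f : EuclideanSpace ℝ (Fin k) → EuclideanSpace ℝ (Fin m))
    (Df : EuclideanSpace ℝ (Fin k) → (EuclideanSpace ℝ (Fin k) →L[ℝ] EuclideanSpace ℝ (Fin m))) :
    Prop :=
  ∀ φ : EuclideanSpace ℝ (Fin k) → ℝ, ContDiff ℝ (⊤ : ℕ∞) φ → HasCompactSupport φ →
    tsupport φ ⊆ Ω → ∀ i : Fin k,
      ∫ x in Ω, fderiv ℝ φ x (EuclideanSpace.single i (1:ℝ)) • f x =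
        - ∫ x in Ω, φ x • Df x (EuclideanSpace.single i (1:ℝ))

/-!
On almost every segment `f` is absolutely continuous and horizontal, and the oscillation of `Df`
along it is small in the mean at small scales. By Egorov this is uniform on large pieces of `Ω`,
where a detour through a third point gives `f` a linear approximation to first order and makes
heights in the group vanish to second order.

At a density point of such a piece the derivative has isotropic range in the contact hyperplane,
hence rank at most `n < k`. So the image of the piece inside a ball of radius `r` is covered by
`O(θ ^ (-n))` sets of Korányi diameter `O(θ * r)`, whose contribution `O(θ ^ (k - n) * r ^ k)` to
the Hausdorff content is a small multiple of the volume of the ball. The null set missed by the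
pieces is handled by the Lusin condition.
-/

open Filter Module Topology Asymptotics
open scoped Uniformity

section Coordinates

variable {n : ℕ}

lemma xIdx_inj {i j : Fin n} : xIdx n i = xIdx n j ↔ i = j := by
  simp [xIdx, Fin.ext_iff]

lemma yIdx_inj {i j : Fin n} : yIdx n i = yIdx n j ↔ i = j := by
  simp [yIdx, Fin.ext_iff]

lemma xIdx_ne_yIdx (i j : Fin n) : xIdx n i ≠ yIdx n j := by
  simp only [xIdx, yIdx, ne_eq, Fin.mk.injEq]
  lia

lemma sum_fin_two_mul_add_one {M : Type*} [AddCommMonoid M] (g : Fin (2 * n + 1) → M) :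
    ∑ i, g i = ∑ j, (g (xIdx n j) + g (yIdx n j)) + g (tIdx n) := by
  rw [Fin.sum_univ_castSucc, ← (finProdFinEquiv.trans (finCongr (mul_comm n 2))).sum_comp,
    Fintype.sum_prod_type]
  simp only [Fin.sum_univ_two]
  congr 2 with j
  congr 2 <;> ext <;> simp [xIdx, yIdx, add_comm]

lemma norm_sq_eq_sum_add_sq (p : Heis n) :
    ‖p‖ ^ 2 = ∑ j, (p (xIdx n j) ^ 2 + p (yIdx n j) ^ 2) + p (tIdx n) ^ 2 := by
  simp_rw [EuclideanSpace.real_norm_sq_eq, sum_fin_two_mul_add_one]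

end Coordinates

section Symplectic

variable {n : ℕ}

/-- The endomorphism `J` of `ℝ^{2n+1}` for which `⟪J v, w⟫` is the standard symplectic form of the
horizontal parts of `v` and `w`. -/
noncomputable def sympJ (n : ℕ) : Heis n →L[ℝ] Heis n :=
  ∑ j : Fin n,
    ((EuclideanSpace.proj (𝕜 := ℝ) (xIdx n j)).smulRight (EuclideanSpace.single (yIdx n j) 1) -
      (EuclideanSpace.proj (𝕜 := ℝ) (yIdx n j)).smulRight (EuclideanSpace.single (xIdx n j) 1))

lemma inner_sympJ (v w : Heis n) :
    inner ℝ (sympJ n v) w =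
      ∑ j, (v (xIdx n j) * w (yIdx n j) - v (yIdx n j) * w (xIdx n j)) := by
  simp [sympJ, sum_inner, inner_sub_left, inner_smul_left, EuclideanSpace.inner_single_left]

lemma inner_sympJ_comm (v w : Heis n) : inner ℝ (sympJ n v) w = -inner ℝ (sympJ n w) v := by
  rw [inner_sympJ, inner_sympJ, ← Finset.sum_neg_distrib]
  exact Finset.sum_congr rfl fun j _ => by ring

lemma inner_sympJ_self (v : Heis n) : inner ℝ (sympJ n v) v = 0 :=
  self_eq_neg.1 (inner_sympJ_comm v v)

lemma abs_inner_sympJ_le (v w : Heis n) : |inner ℝ (sympJ n v) w| ≤ ‖sympJ n‖ * ‖v‖ * ‖w‖ :=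
  (abs_real_inner_le_norm _ _).trans (by gcongr; exact (sympJ n).le_opNorm v)

lemma inner_sympJ_single_xIdx (v : Heis n) (j : Fin n) :
    inner ℝ (sympJ n v) (EuclideanSpace.single (xIdx n j) 1) = -v (yIdx n j) := by
  simp [inner_sympJ, xIdx_inj, (xIdx_ne_yIdx _ _).symm]

lemma inner_sympJ_single_yIdx (v : Heis n) (j : Fin n) :
    inner ℝ (sympJ n v) (EuclideanSpace.single (yIdx n j) 1) = v (xIdx n j) := by
  simp [inner_sympJ, yIdx_inj, xIdx_ne_yIdx]

lemma eq_zero_of_sympJ_eq_zero {v : Heis n} (hJ : sympJ n v = 0) (ht : v (tIdx n) = 0) :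
    v = 0 := by
  have hx (j : Fin n) : v (xIdx n j) = 0 := by
    rw [← inner_sympJ_single_yIdx, hJ, inner_zero_left]
  have hy (j : Fin n) : v (yIdx n j) = 0 := by
    rw [← neg_eq_zero, ← inner_sympJ_single_xIdx, hJ, inner_zero_left]
  rw [← norm_eq_zero, ← sq_eq_zero_iff, norm_sq_eq_sum_add_sq]
  simp [hx, hy, ht]

/-- The value `α(p)` of the standard contact form at `p`, so that `kerAlpha n p` is its kernel. -/
noncomputable def contactForm (p : Heis n) : Heis n →L[ℝ] ℝ :=
  EuclideanSpace.proj (tIdx n) + (2 : ℝ) • innerSL ℝ (sympJ n p)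

lemma contactForm_apply (p v : Heis n) :
    contactForm p v = v (tIdx n) + 2 * inner ℝ (sympJ n p) v := by
  simp [contactForm]

lemma contactForm_add_apply (p q v : Heis n) :
    contactForm (p + q) v = contactForm p v + 2 * inner ℝ (sympJ n q) v := by
  simp only [contactForm_apply, map_add, inner_add_left]
  ring

lemma mem_kerAlpha_iff {p v : Heis n} : v ∈ kerAlpha n p ↔ contactForm p v = 0 := by
  rw [contactForm_apply, inner_sympJ]
  rfl

/-- An isotropic subspace `V` of a contact hyperplane is mapped injectively by `J` into `Vᗮ`,
whence `2 * dim V ≤ 2 * n + 1`. -/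
lemma finrank_le_of_isotropic {p : Heis n} {V : Submodule ℝ (Heis n)}
    (hV : ∀ v ∈ V, v ∈ kerAlpha n p) (hiso : ∀ u ∈ V, ∀ v ∈ V, inner ℝ (sympJ n u) v = 0) :
    finrank ℝ V ≤ n := by
  have hinj : Function.Injective ((sympJ n).toLinearMap.domRestrict V) := by
    refine (injective_iff_map_eq_zero _).2 fun v hv => Subtype.ext ?_
    have hJ : sympJ n v = 0 := hv
    have ht := mem_kerAlpha_iff.1 (hV v v.2)
    rw [contactForm_apply, inner_sympJ_comm, hJ, inner_zero_left] at ht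
    exact eq_zero_of_sympJ_eq_zero hJ (by linarith)
  have horth : LinearMap.range ((sympJ n).toLinearMap.domRestrict V) ≤ Vᗮ := by
    rintro _ ⟨u, rfl⟩
    exact (Submodule.mem_orthogonal' _ _).2 fun v hv => hiso u u.2 v hv
  have hrank := LinearMap.finrank_range_of_inj hinj
  have hle := hrank.symm.trans_le (Submodule.finrank_mono horth)
  have hsum := V.finrank_add_finrank_orthogonal
  rw [finrank_euclideanSpace_fin] at hsum
  omega

end Symplectic

section Height

variable {n : ℕ}

/-- The vertical coordinate `p_t - q_t + 2 ⟪J q, p⟫` of the group element `q⁻¹ p`. -/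
noncomputable def height (p q : Heis n) : ℝ :=
  contactForm q (p - q)

lemma height_eq (p q : Heis n) :
    height p q = p (tIdx n) - q (tIdx n) + 2 * inner ℝ (sympJ n q) p := by
  simp [height, contactForm_apply, inner_sub_right, inner_sympJ_self]

lemma height_comm (p q : Heis n) : height p q = -height q p := by
  rw [height_eq, height_eq, inner_sympJ_comm]
  ring

lemma height_add_height_add_height (y w z : Heis n) :
    height y w + height w z + height z y = 2 * inner ℝ (sympJ n (w - z)) (y - z) := by
  have h₁ := inner_sympJ_comm w z
  have h₂ := inner_sympJ_comm z y
  have h₃ := inner_sympJ_self z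
  simp only [height_eq, map_sub, inner_sub_left, inner_sub_right]
  linarith

lemma dK_eq_height (p q : Heis n) :
    dK n p q = ((‖p - q‖ ^ 2 - (p - q) (tIdx n) ^ 2) ^ 2 + height p q ^ 2) ^ ((1 : ℝ) / 4) := by
  have hsum : ∑ j, (q (xIdx n j) * p (yIdx n j) - p (xIdx n j) * q (yIdx n j)) =
      inner ℝ (sympJ n q) p := by
    rw [inner_sympJ]
    exact Finset.sum_congr rfl fun j _ => by ring
  rw [norm_sq_eq_sum_add_sq, dK, hsum, height_eq, add_sub_cancel_right]
  rfl

lemma dK_le_of_norm_sub_le {p q : Heis n} {ρ : ℝ} (hρ : 0 ≤ ρ) (hnorm : ‖p - q‖ ≤ ρ)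
    (hheight : |height p q| ≤ ρ ^ 2) : dK n p q ≤ 2 * ρ := by
  have hhor : ‖p - q‖ ^ 2 - (p - q) (tIdx n) ^ 2 ≤ ρ ^ 2 := by
    nlinarith [norm_nonneg (p - q), sq_nonneg ((p - q) (tIdx n))]
  have hhor₀ : 0 ≤ ‖p - q‖ ^ 2 - (p - q) (tIdx n) ^ 2 := by
    rw [norm_sq_eq_sum_add_sq, add_sub_cancel_right]
    positivity
  calc dK n p q ≤ ((2 * ρ) ^ 4) ^ ((1 : ℝ) / 4) := by
        rw [dK_eq_height]
        gcongr
        have := pow_le_pow_left₀ hhor₀ hhor 2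
        have := sq_le_sq' (abs_le.1 hheight).1 (abs_le.1 hheight).2
        nlinarith [sq_nonneg (ρ ^ 2)]
    _ = 2 * ρ := by
        simpa using Real.pow_rpow_inv_natCast (by positivity : 0 ≤ 2 * ρ) (by simp : 4 ≠ 0)

end Height

section HorizontalSegment

variable {E : Type*} [NormedAddCommGroup E] [NormedSpace ℝ E]

lemma norm_intervalIntegral_apply_sub_smul_le {W : Type*} [NormedAddCommGroup W] [NormedSpace ℝ W]
    [CompleteSpace W] {H : ℝ → E →L[ℝ] W} (hH : IntervalIntegrable H volume 0 1) (A : E →L[ℝ] W)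
    (v : E) {s : ℝ} (hs : s ∈ Icc (0 : ℝ) 1) :
    ‖(∫ σ in 0..s, H σ v) - s • A v‖ ≤ (∫ σ in 0..1, ‖H σ - A‖) * ‖v‖ := by
  have hsub : uIcc 0 s ⊆ uIcc 0 1 := by
    rw [uIcc_of_le hs.1, uIcc_of_le zero_le_one]
    exact Icc_subset_Icc_right hs.2
  have hHv : IntervalIntegrable (fun σ => H σ v) volume 0 1 :=
    ⟨hH.1.apply_continuousLinearMap v, hH.2.apply_continuousLinearMap v⟩
  have hdiff : IntervalIntegrable (fun σ => ‖H σ - A‖) volume 0 1 :=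
    (hH.sub intervalIntegrable_const).norm
  calc ‖(∫ σ in 0..s, H σ v) - s • A v‖ = ‖∫ σ in 0..s, (H σ v - A v)‖ := by
        rw [intervalIntegral.integral_sub (hHv.mono_set hsub) intervalIntegrable_const,
          intervalIntegral.integral_const, sub_zero]
    _ ≤ ∫ σ in 0..s, ‖H σ - A‖ * ‖v‖ :=
        intervalIntegral.norm_integral_le_of_norm_le hs.1
          (ae_of_all _ fun σ _ => (H σ - A).le_opNorm v) ((hdiff.mono_set hsub).mul_const _)
    _ = (∫ σ in 0..s, ‖H σ - A‖) * ‖v‖ := intervalIntegral.integral_mul_const _ _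
    _ ≤ (∫ σ in 0..1, ‖H σ - A‖) * ‖v‖ := by
        gcongr
        exact intervalIntegral.integral_mono_interval le_rfl hs.1 hs.2
          (ae_of_all _ fun σ => norm_nonneg _) hdiff

variable {n : ℕ} {F : E → Heis n} {G : E → E →L[ℝ] Heis n} {a v : E}

/-- Along the segment from `a` to `a + v` the map `F` is the primitive of the directional
derivative given by the field `G` of linear maps, and it is a horizontal curve there. The endpoint
is listed separately because the other identities are required at almost every parameter only. -/
structure IsHorizontalSegment (F : E → Heis n) (G : E → E →L[ℝ] Heis n) (a v : E) : Prop where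
  intervalIntegrable : IntervalIntegrable (fun s : ℝ => G (a + s • v)) volume 0 1
  endpoint : F (a + v) = F a + ∫ s in (0 : ℝ)..1, G (a + s • v) v
  primitive : ∀ᵐ s : ℝ, s ∈ Ioc (0 : ℝ) 1 →
    F (a + s • v) = F a + ∫ σ in (0 : ℝ)..s, G (a + σ • v) v
  contact : ∀ᵐ s : ℝ, s ∈ Ioc (0 : ℝ) 1 → G (a + s • v) v ∈ kerAlpha n (F (a + s • v))

lemma abs_contactForm_apply_le {p u e ρ : Heis n} {s : ℝ} (hs : |s| ≤ 1)
    (h : u + ρ ∈ kerAlpha n (p + (s • u + e))) :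
    |contactForm p (u + ρ)| ≤ 2 * ‖sympJ n‖ * (‖u‖ * ‖ρ‖ + ‖e‖ * (‖u‖ + ‖ρ‖)) := by
  have hform : contactForm p (u + ρ) =
      -2 * (s * inner ℝ (sympJ n u) ρ + inner ℝ (sympJ n e) u + inner ℝ (sympJ n e) ρ) := by
    rw [mem_kerAlpha_iff, contactForm_add_apply] at h
    rw [eq_neg_of_add_eq_zero_left h]
    simp only [map_add, map_smul, inner_add_left, inner_add_right, real_inner_smul_left,
      inner_sympJ_self]
    ring
  have huρ : |s * inner ℝ (sympJ n u) ρ| ≤ ‖sympJ n‖ * ‖u‖ * ‖ρ‖ := by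
    rw [abs_mul]
    exact (mul_le_of_le_one_left (abs_nonneg _) hs).trans (abs_inner_sympJ_le u ρ)
  calc |contactForm p (u + ρ)|
      = 2 * |s * inner ℝ (sympJ n u) ρ + inner ℝ (sympJ n e) u + inner ℝ (sympJ n e) ρ| := by
        rw [hform, abs_mul, abs_neg, abs_two]
    _ ≤ 2 * (‖sympJ n‖ * ‖u‖ * ‖ρ‖ + ‖sympJ n‖ * ‖e‖ * ‖u‖ + ‖sympJ n‖ * ‖e‖ * ‖ρ‖) := by
        gcongr
        refine (abs_add_three _ _ _).trans ?_
        gcongr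
        exacts [abs_inner_sympJ_le e u, abs_inner_sympJ_le e ρ]
    _ = _ := by ring

namespace IsHorizontalSegment

lemma norm_sub_le (h : IsHorizontalSegment F G a v) (A : E →L[ℝ] Heis n) :
    ‖F (a + v) - F a - A v‖ ≤ (∫ s in (0 : ℝ)..1, ‖G (a + s • v) - A‖) * ‖v‖ := by
  have hle := norm_intervalIntegral_apply_sub_smul_le h.intervalIntegrable A v
    (right_mem_Icc.2 zero_le_one)
  rwa [one_smul, ← sub_eq_of_eq_add' h.endpoint] at hle

lemma height_eq_integral (h : IsHorizontalSegment F G a v) :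
    height (F (a + v)) (F a) = ∫ s in (0 : ℝ)..1, contactForm (F a) (G (a + s • v) v) := by
  have hint : IntervalIntegrable (fun s : ℝ => G (a + s • v) v) volume 0 1 :=
    ⟨h.intervalIntegrable.1.apply_continuousLinearMap v,
      h.intervalIntegrable.2.apply_continuousLinearMap v⟩
  rw [(contactForm (F a)).intervalIntegral_comp_comm hint, height, sub_eq_of_eq_add' h.endpoint]

lemma ae_abs_contactForm_le (h : IsHorizontalSegment F G a v) (A : E →L[ℝ] Heis n) :
    ∀ᵐ s : ℝ, s ∈ Ioc (0 : ℝ) 1 → |contactForm (F a) (G (a + s • v) v)| ≤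
      2 * ‖sympJ n‖ * ‖v‖ ^ 2 * (‖A‖ * ‖G (a + s • v) - A‖ +
        (∫ σ in (0 : ℝ)..1, ‖G (a + σ • v) - A‖) * (‖A‖ + ‖G (a + s • v) - A‖)) := by
  filter_upwards [h.primitive, h.contact] with s hprim hcontact hs
  have he := norm_intervalIntegral_apply_sub_smul_le h.intervalIntegrable A v ⟨hs.1.le, hs.2⟩
  have hFs : F (a + s • v) =
      F a + (s • A v + ((∫ σ in (0 : ℝ)..s, G (a + σ • v) v) - s • A v)) := by
    rw [hprim hs, add_sub_cancel]
  have hGs : G (a + s • v) v = A v + (G (a + s • v) - A) v := by simp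
  have hmem := hcontact hs
  rw [hFs, hGs] at hmem
  rw [hGs]
  refine (abs_contactForm_apply_le (by rw [abs_of_pos hs.1]; exact hs.2) hmem).trans ?_
  have hA := A.le_opNorm v
  have hρ := (G (a + s • v) - A).le_opNorm v
  calc 2 * ‖sympJ n‖ * (‖A v‖ * ‖(G (a + s • v) - A) v‖ +
        ‖(∫ σ in (0 : ℝ)..s, G (a + σ • v) v) - s • A v‖ * (‖A v‖ + ‖(G (a + s • v) - A) v‖))
      ≤ 2 * ‖sympJ n‖ * (‖A‖ * ‖v‖ * (‖G (a + s • v) - A‖ * ‖v‖) +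
        (∫ σ in (0 : ℝ)..1, ‖G (a + σ • v) - A‖) * ‖v‖ *
          (‖A‖ * ‖v‖ + ‖G (a + s • v) - A‖ * ‖v‖)) := by
        gcongr
        exact (norm_nonneg _).trans he
    _ = _ := by ring

lemma abs_height_le (h : IsHorizontalSegment F G a v) (A : E →L[ℝ] Heis n) {ω : ℝ}
    (hω : ∫ s in (0 : ℝ)..1, ‖G (a + s • v) - A‖ = ω) :
    |height (F (a + v)) (F a)| ≤ 2 * ‖sympJ n‖ * (2 * ‖A‖ * ω + ω ^ 2) * ‖v‖ ^ 2 := by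
  have hdiff : IntervalIntegrable (fun s : ℝ => ‖G (a + s • v) - A‖) volume 0 1 :=
    (h.intervalIntegrable.sub intervalIntegrable_const).norm
  have hconst : IntervalIntegrable (fun _ : ℝ => ‖A‖) volume 0 1 := intervalIntegrable_const
  have hbound := h.ae_abs_contactForm_le A
  rw [hω] at hbound
  rw [h.height_eq_integral, ← Real.norm_eq_abs]
  refine (intervalIntegral.norm_integral_le_of_norm_le zero_le_one hbound
    (((hdiff.const_mul _).add ((hconst.add hdiff).const_mul _)).const_mul _)).trans_eq ?_
  rw [intervalIntegral.integral_const_mul, intervalIntegral.integral_add (hdiff.const_mul _)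
    ((hconst.add hdiff).const_mul _), intervalIntegral.integral_const_mul,
    intervalIntegral.integral_const_mul, intervalIntegral.integral_add hconst hdiff,
    intervalIntegral.integral_const, hω]
  simp only [sub_zero, one_smul]
  ring

end IsHorizontalSegment

end HorizontalSegment

section WeakDerivative

open scoped ContDiff

variable {E : Type*} [NormedAddCommGroup E] [NormedSpace ℝ E] [MeasurableSpace E]
  {W : Type*} [NormedAddCommGroup W] [NormedSpace ℝ W]

/-- `G` is a weak derivative of `F` on `U`, for integration against `μ` and tested in every
direction. -/
def HasWeakFDerivOn (F : E → W) (G : E → E →L[ℝ] W) (U : Set E) (μ : Measure E) : Prop :=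
  ∀ φ : E → ℝ, ContDiff ℝ ∞ φ → HasCompactSupport φ → tsupport φ ⊆ U →
    ∀ v, ∫ x, fderiv ℝ φ x v • F x ∂μ = -∫ x, φ x • G x v ∂μ

lemma intervalIntegral_fderiv_sub_smul {E : Type*} [NormedAddCommGroup E] [NormedSpace ℝ E]
    {φ : E → ℝ} (hφ : ContDiff ℝ 1 φ) (x v : E) :
    ∫ s in (0 : ℝ)..1, fderiv ℝ φ (x - s • v) v = φ x - φ (x - v) := by
  have hderiv (s : ℝ) : HasDerivAt (fun s : ℝ => -φ (x - s • v)) (fderiv ℝ φ (x - s • v) v) s := by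
    have hline : HasDerivAt (fun s : ℝ => x - s • v) (-v) s := by
      simpa using ((hasDerivAt_id s).smul_const v).const_sub x
    exact ((hφ.differentiable one_ne_zero _).hasFDerivAt.comp_hasDerivAt s hline).neg.congr_deriv
      (by simp)
  have hcont : Continuous fun s : ℝ => fderiv ℝ φ (x - s • v) v :=
    ((hφ.continuous_fderiv one_ne_zero).comp (by fun_prop)).clm_apply continuous_const
  rw [intervalIntegral.integral_eq_sub_of_hasDerivAt (fun s _ => hderiv s)
    (hcont.intervalIntegrable 0 1)]
  simp [add_comm, sub_eq_add_neg]

variable [BorelSpace E] {F : E → W} {G : E → E →L[ℝ] W} {U : Set E} {μ : Measure E}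

lemma HasWeakFDerivOn.integral_fderiv_sub_smul [μ.IsAddRightInvariant]
    (h : HasWeakFDerivOn F G U μ) {φ : E → ℝ} (hφ : ContDiff ℝ ∞ φ) (hφc : HasCompactSupport φ)
    {w : E} (hw : ∀ x ∈ tsupport φ, x + w ∈ U) (v : E) :
    ∫ x, fderiv ℝ φ (x - w) v • F x ∂μ = -∫ x, φ x • G (x + w) v ∂μ := by
  have hsupp : tsupport (fun x => φ (x - w)) ⊆ U := fun x hx => by
    have hx' : x - w ∈ tsupport φ :=
      tsupport_comp_subset_preimage φ (f := fun x => x - w) (by fun_prop) hx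
    simpa using hw _ hx'
  have hparts := h (fun x => φ (x - w)) (hφ.comp (contDiff_id.sub contDiff_const))
    (hφc.comp_homeomorph (Homeomorph.subRight w)) hsupp v
  simp only [fderiv_comp_sub] at hparts
  rw [hparts, ← integral_add_right_eq_self (fun x => φ (x - w) • G x v) w]
  simp only [add_sub_cancel_right]

variable [FiniteDimensional ℝ E] [μ.IsAddHaarMeasure]

lemma integrable_comp_add_smul {V : Type*} [NormedAddCommGroup V] {g : E → V}
    (hg : StronglyMeasurable g) (hgi : Integrable g μ) (v : E) :
    Integrable (fun p : ℝ × E => g (p.2 + p.1 • v)) ((volume.restrict (Ioc 0 1)).prod μ) := by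
  have hmeas : StronglyMeasurable fun p : ℝ × E => g (p.2 + p.1 • v) :=
    hg.comp_measurable (by fun_prop)
  rw [integrable_prod_iff hmeas.aestronglyMeasurable]
  refine ⟨ae_of_all _ fun s => hgi.comp_add_right (s • v), ?_⟩
  simp only [integral_add_right_eq_self (fun x => ‖g x‖)]
  exact integrable_const _

lemma integral_smul_comp_add_sub [CompleteSpace W] (hF : Integrable F μ) {φ : E → ℝ}
    (hφ : ContDiff ℝ 1 φ) (hφc : HasCompactSupport φ) (v : E) :
    ∫ x, φ x • (F (x + v) - F x) ∂μ =
      -∫ s in (0 : ℝ)..1, ∫ x, fderiv ℝ φ (x - s • v) v • F x ∂μ := by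
  have hcont : Continuous fun x => fderiv ℝ φ x v :=
    (hφ.continuous_fderiv one_ne_zero).clm_apply continuous_const
  obtain ⟨C, hC⟩ := (hφc.fderiv_apply ℝ v).exists_bound_of_continuous hcont
  have hprod : Integrable (fun p : ℝ × E => fderiv ℝ φ (p.2 - p.1 • v) v • F p.2)
      ((volume.restrict (uIoc 0 1)).prod μ) := by
    rw [uIoc_of_le zero_le_one]
    exact (hF.comp_snd _).bdd_smul C (hcont.comp (by fun_prop)).aestronglyMeasurable
      (ae_of_all _ fun p => hC _)
  have hint : Integrable (fun x => φ x • F x) μ :=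
    hF.locallyIntegrable.integrable_smul_left_of_hasCompactSupport hφ.continuous hφc
  have hint₁ : Integrable (fun x => φ x • F (x + v)) μ :=
    (hF.comp_add_right v).locallyIntegrable.integrable_smul_left_of_hasCompactSupport
      hφ.continuous hφc
  have hint₂ : Integrable (fun x => φ (x - v) • F x) μ :=
    hF.locallyIntegrable.integrable_smul_left_of_hasCompactSupport
      (hφ.continuous.comp (by fun_prop)) (hφc.comp_homeomorph (Homeomorph.subRight v))
  rw [intervalIntegral_integral_swap hprod]
  simp only [intervalIntegral.integral_smul_const, intervalIntegral_fderiv_sub_smul hφ, sub_smul,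
    smul_sub]
  rw [integral_sub hint₁ hint, integral_sub hint hint₂,
    ← integral_add_right_eq_self (fun x => φ (x - v) • F x) v]
  simp only [add_sub_cancel_right, neg_sub]

lemma HasWeakFDerivOn.ae_eq_add_intervalIntegral [CompleteSpace W] (h : HasWeakFDerivOn F G U μ)
    (hF : Integrable F μ) (hG : StronglyMeasurable G) (hGi : Integrable G μ) {U' : Set E}
    (hU' : IsOpen U') {v : E} (hv : ∀ a ∈ U', ∀ s ∈ Icc (0 : ℝ) 1, a + s • v ∈ U) :
    ∀ᵐ a ∂μ, a ∈ U' → F (a + v) = F a + ∫ s in (0 : ℝ)..1, G (a + s • v) v := by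
  have hprod : Integrable (fun p : ℝ × E => G (p.2 + p.1 • v) v)
      ((volume.restrict (uIoc 0 1)).prod μ) := by
    rw [uIoc_of_le zero_le_one]
    exact (integrable_comp_add_smul hG hGi v).apply_continuousLinearMap v
  have hprim : Integrable (fun a => ∫ s in (0 : ℝ)..1, G (a + s • v) v) μ := by
    simp only [intervalIntegral.intervalIntegral_eq_integral_uIoc, zero_le_one, if_true, one_smul]
    exact hprod.integral_prod_right
  have hdiff : Integrable (fun a => F (a + v) - F a) μ := (hF.comp_add_right v).sub hF
  suffices ∀ᵐ a ∂μ, a ∈ U' → F (a + v) - F a - ∫ s in (0 : ℝ)..1, G (a + s • v) v = 0 by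
    filter_upwards [this] with a ha haU'
    exact sub_eq_iff_eq_add'.1 (sub_eq_zero.1 (ha haU'))
  refine hU'.ae_eq_zero_of_integral_contDiff_smul_eq_zero
    ((hdiff.sub hprim).locallyIntegrable.locallyIntegrableOn _) fun φ hφ hφc hφU' => ?_
  obtain ⟨C, hC⟩ := hφc.exists_bound_of_continuous hφ.continuous
  have hprodφ : Integrable (fun p : ℝ × E => φ p.2 • G (p.2 + p.1 • v) v)
      ((volume.restrict (uIoc 0 1)).prod μ) :=
    hprod.bdd_smul C (hφ.continuous.comp continuous_snd).aestronglyMeasurable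
      (ae_of_all _ fun p => hC _)
  have hparts : ∫ s in (0 : ℝ)..1, ∫ x, fderiv ℝ φ (x - s • v) v • F x ∂μ =
      ∫ s in (0 : ℝ)..1, -∫ x, φ x • G (x + s • v) v ∂μ := by
    refine intervalIntegral.integral_congr fun s hs => ?_
    rw [uIcc_of_le zero_le_one] at hs
    exact h.integral_fderiv_sub_smul hφ hφc (fun x hx => hv x (hφU' hx) s hs) v
  simp only [smul_sub _ (F _ - F _)]
  rw [integral_sub
      (hdiff.locallyIntegrable.integrable_smul_left_of_hasCompactSupport hφ.continuous hφc)
      (hprim.locallyIntegrable.integrable_smul_left_of_hasCompactSupport hφ.continuous hφc),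
    integral_smul_comp_add_sub hF (hφ.of_le (by simp)) hφc, hparts, intervalIntegral.integral_neg,
    neg_neg, intervalIntegral_integral_swap hprodφ]
  simp only [intervalIntegral.integral_smul, sub_self]

end WeakDerivative

section Segment

variable {E : Type*} [NormedAddCommGroup E] [NormedSpace ℝ E]
  {W : Type*} [NormedAddCommGroup W] [NormedSpace ℝ W] {G : E → E →L[ℝ] W}

lemma add_smul_mem_thickening {U : Set E} {r : ℝ} {a v : E} (ha : a ∈ U) (hv : ‖v‖ < r) {s : ℝ}
    (hs : s ∈ Icc (0 : ℝ) 1) : a + s • v ∈ thickening r U := by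
  refine mem_thickening_iff.2 ⟨a, ha, ?_⟩
  rw [dist_self_add_left, norm_smul, Real.norm_of_nonneg hs.1]
  exact (mul_le_of_le_one_left (norm_nonneg v) hs.2).trans_lt hv

lemma intervalIntegral_apply_smul (a v : E) (s : ℝ) :
    ∫ σ in (0 : ℝ)..1, G (a + σ • s • v) (s • v) = ∫ σ in (0 : ℝ)..s, G (a + σ • v) v := by
  have hscale := intervalIntegral.smul_integral_comp_mul_right (a := 0) (b := 1)
    (fun σ => G (a + σ • v) v) s
  rw [zero_mul, one_mul] at hscale
  rw [← hscale, ← intervalIntegral.integral_smul]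
  simp only [map_smul, smul_smul]

end Segment

section AlmostEverySegment

variable {E : Type*} [NormedAddCommGroup E] [NormedSpace ℝ E] [FiniteDimensional ℝ E]
  [MeasurableSpace E] [BorelSpace E] {μ : Measure E} [μ.IsAddHaarMeasure]

lemma ae_ae_ae_smul_mem {S : Set (E × E)} (hS : MeasurableSet S)
    (h : ∀ v, ∀ᵐ a ∂μ, (a, v) ∈ S) : ∀ᵐ a ∂μ, ∀ᵐ v ∂μ, ∀ᵐ s : ℝ, (a, s • v) ∈ S := by
  have hmeas : MeasurableSet {p : E × E × ℝ | (p.1, p.2.2 • p.2.1) ∈ S} :=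
    (show Measurable fun p : E × E × ℝ => (p.1, p.2.2 • p.2.1) by fun_prop) hS
  have hswap : ∀ᵐ a ∂μ, ∀ᵐ q ∂μ.prod volume, (a, q.2 • q.1) ∈ S :=
    (Measure.ae_ae_comm hmeas).2 (ae_of_all _ fun q => h _)
  exact hswap.mono fun a ha => Measure.ae_ae_of_ae_prod ha

lemma ae_ae_ae_add_smul {p : E → Prop} (h : ∀ᵐ x ∂μ, p x) :
    ∀ᵐ a ∂μ, ∀ᵐ v ∂μ, ∀ᵐ s : ℝ, p (a + s • v) := by
  obtain ⟨N, hpN, hNmeas, hN⟩ := exists_measurable_superset_of_null (ae_iff.1 h)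
  have hmeas : MeasurableSet {q : E × E | q.1 + q.2 ∉ N} := measurable_add hNmeas.compl
  have htranslate (v : E) : ∀ᵐ a ∂μ, a + v ∉ N :=
    (measurePreserving_add_right μ v).quasiMeasurePreserving.ae (compl_mem_ae_iff.2 hN)
  filter_upwards [ae_ae_ae_smul_mem hmeas htranslate] with a ha
  filter_upwards [ha] with v hv
  filter_upwards [hv] with s hs
  by_contra hp
  exact hs (hpN hp)

lemma ae_ae_intervalIntegrable_comp_add_smul {V : Type*} [NormedAddCommGroup V] {g : E → V}
    (hg : StronglyMeasurable g) (hgi : Integrable g μ) :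
    ∀ᵐ a ∂μ, ∀ᵐ v ∂μ, IntervalIntegrable (fun s : ℝ => g (a + s • v)) volume 0 1 := by
  simp only [intervalIntegrable_iff_integrableOn_Ioc_of_le zero_le_one]
  have hmeas : StronglyMeasurable fun p : (E × E) × ℝ => g (p.1.1 + p.2 • p.1.2) :=
    hg.comp_measurable (by fun_prop)
  rw [Measure.ae_ae_comm (measurableSet_integrable
    (f := fun (p : E × E) (s : ℝ) => g (p.1 + s • p.2)) hmeas)]
  exact ae_of_all _ fun v => (integrable_comp_add_smul hg hgi v).prod_left_ae

variable {W : Type*} [NormedAddCommGroup W] [NormedSpace ℝ W] {F : E → W} {G : E → E →L[ℝ] W}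

lemma measurableSet_eq_add_intervalIntegral (hF : StronglyMeasurable F)
    (hG : StronglyMeasurable G) :
    MeasurableSet
      {p : E × E | F (p.1 + p.2) = F p.1 + ∫ s in (0 : ℝ)..1, G (p.1 + s • p.2) p.2} := by
  simp only [intervalIntegral.integral_of_le zero_le_one]
  have hmeas : StronglyMeasurable fun p : (E × E) × ℝ => G (p.1.1 + p.2 • p.1.2) p.1.2 :=
    isBoundedBilinearMap_apply.continuous.comp_stronglyMeasurable
      ((hG.comp_measurable (show Measurable fun p : (E × E) × ℝ => p.1.1 + p.2 • p.1.2 by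
        fun_prop)).prodMk (measurable_snd.comp measurable_fst).stronglyMeasurable)
  exact StronglyMeasurable.measurableSet_eq_fun (hF.comp_measurable (by fun_prop))
    ((hF.comp_measurable measurable_fst).add hmeas.integral_prod_right)

theorem HasWeakFDerivOn.ae_ae_isHorizontalSegment {n : ℕ} {F : E → Heis n}
    {G : E → E →L[ℝ] Heis n} {U U' : Set E} {r : ℝ} (h : HasWeakFDerivOn F G U μ)
    (hF : StronglyMeasurable F) (hFi : Integrable F μ)
    (hG : StronglyMeasurable G) (hGi : Integrable G μ)
    (hcontact : ∀ᵐ x ∂μ, x ∈ U → ∀ v, G x v ∈ kerAlpha n (F x))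
    (hU' : IsOpen U') (hr : thickening r U' ⊆ U) :
    ∀ᵐ a ∂μ, a ∈ U' → ∀ᵐ v ∂μ, ‖v‖ < r → IsHorizontalSegment F G a v := by
  set S : Set (E × E) := {p | p.1 ∈ U' → ‖p.2‖ < r →
    F (p.1 + p.2) = F p.1 + ∫ s in (0 : ℝ)..1, G (p.1 + s • p.2) p.2}
  have hSmeas : MeasurableSet S :=
    (measurable_fst hU'.measurableSet).imp
      ((measurableSet_lt (by fun_prop) measurable_const).imp
        (measurableSet_eq_add_intervalIntegral hF hG))
  have hSae (v : E) : ∀ᵐ a ∂μ, (a, v) ∈ S := by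
    by_cases hv : ‖v‖ < r
    · filter_upwards [h.ae_eq_add_intervalIntegral hFi hG hGi hU' fun a ha s hs =>
        hr (add_smul_mem_thickening ha hv hs)] with a ha haU' _ using ha haU'
    · exact ae_of_all _ fun a _ hv' => absurd hv' hv
  have hSae_ae : ∀ᵐ a ∂μ, ∀ᵐ v ∂μ, (a, v) ∈ S :=
    (Measure.ae_ae_comm hSmeas).2 (ae_of_all _ hSae)
  filter_upwards [ae_ae_intervalIntegrable_comp_add_smul hG hGi, hSae_ae,
    ae_ae_ae_smul_mem hSmeas hSae, ae_ae_ae_add_smul hcontact] with a hint hend hprim hker haU'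
  filter_upwards [hint, hend, hprim, hker] with v hint hend hprim hker hv
  refine ⟨hint, hend haU' hv, ?_, ?_⟩
  · filter_upwards [hprim] with s hs hs01
    rw [← intervalIntegral_apply_smul]
    exact hs haU' <| by simpa using
      (mem_thickening_iff.1 (add_smul_mem_thickening (mem_singleton a) hv ⟨hs01.1.le, hs01.2⟩))
  · filter_upwards [hker] with s hs hs01
    exact hs (hr (add_smul_mem_thickening haU' hv ⟨hs01.1.le, hs01.2⟩)) v

end AlmostEverySegment

section BallAverages

variable {E : Type*} [NormedAddCommGroup E] [NormedSpace ℝ E] [FiniteDimensional ℝ E]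
  [MeasurableSpace E] [BorelSpace E] {μ : Measure E} [μ.IsAddHaarMeasure] {u : E → ℝ≥0∞}

lemma setLAverage_closedBall_comp_add_smul (hu : Measurable u) (a : E) {s : ℝ} (hs : 0 < s)
    (ρ : ℝ) :
    ⨍⁻ v in closedBall 0 ρ, u (a + s • v) ∂μ = ⨍⁻ y in closedBall a (s * ρ), u y ∂μ := by
  have hmeas : Measurable fun v : E => a + s • v := by fun_prop
  have hpre : closedBall (0 : E) ρ = (fun v => a + s • v) ⁻¹' closedBall a (s * ρ) := by
    ext v
    simp only [mem_preimage, mem_closedBall, dist_zero_right, dist_self_add_left, norm_smul,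
      Real.norm_of_nonneg hs.le, mul_le_mul_iff_right₀ hs]
  have hmap : μ.map (fun v => a + s • v) = ENNReal.ofReal |(s ^ finrank ℝ E)⁻¹| • μ := by
    rw [show (fun v : E => a + s • v) = (a + ·) ∘ (s • ·) from rfl,
      ← Measure.map_map (by fun_prop) (by fun_prop),
      Measure.map_addHaar_smul μ hs.ne', Measure.map_smul, map_add_left_eq_self]
  rw [setLAverage_eq, setLAverage_eq, hpre,
    ← setLIntegral_map measurableSet_closedBall hu hmeas,
    ← Measure.map_apply hmeas measurableSet_closedBall, hmap, setLIntegral_smul_measure,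
    Measure.smul_apply]
  exact ENNReal.mul_div_mul_left _ _ (by positivity) ENNReal.ofReal_ne_top

lemma setLAverage_closedBall_le_of_subset {x y : E} {ρ r : ℝ} (hρ : 0 < ρ) (hr : 0 ≤ r)
    (h : closedBall x ρ ⊆ closedBall y r) :
    ⨍⁻ v in closedBall x ρ, u v ∂μ ≤
      ENNReal.ofReal ((r / ρ) ^ finrank ℝ E) * ⨍⁻ v in closedBall y r, u v ∂μ := by
  have hvol : μ (closedBall y r) =
      ENNReal.ofReal ((r / ρ) ^ finrank ℝ E) * μ (closedBall x ρ) := by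
    rw [Measure.addHaar_closedBall_center μ x,
      ← Measure.addHaar_closedBall_mul μ y (div_nonneg hr hρ.le) hρ.le, div_mul_cancel₀ _ hρ.ne']
  rw [setLAverage_eq]
  refine ENNReal.div_le_of_le_mul ?_
  rw [mul_right_comm, ← hvol, measure_mul_setLAverage _ measure_closedBall_lt_top.ne]
  exact lintegral_mono_set h

end BallAverages

section Oscillation

variable {E : Type*} [NormedAddCommGroup E] [NormedSpace ℝ E] [MeasurableSpace E]
  {V : Type*} [NormedAddCommGroup V] {G : E → V}

/-- The mean of `‖G - G a‖` over the segment from `a` to `a + v`. -/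
noncomputable def segmentOsc (G : E → V) (a v : E) : ℝ≥0∞ :=
  ∫⁻ s in Ioc (0 : ℝ) 1, ‖G (a + s • v) - G a‖ₑ

/-- The mean of `segmentOsc G a v` over the directions `v` of length at most `r`. -/
noncomputable def meanSegmentOsc (μ : Measure E) (G : E → V) (a : E) (r : ℝ) : ℝ≥0∞ :=
  ⨍⁻ v in closedBall 0 r, segmentOsc G a v ∂μ

variable [FiniteDimensional ℝ E] [BorelSpace E]

lemma measurable_segmentOsc (hG : StronglyMeasurable G) :
    Measurable fun p : E × E => segmentOsc G p.1 p.2 := by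
  have hosc : StronglyMeasurable fun p : (E × E) × ℝ => G (p.1.1 + p.2 • p.1.2) - G p.1.1 :=
    (hG.comp_measurable (by fun_prop)).sub (hG.comp_measurable (by fun_prop))
  exact hosc.enorm.lintegral_prod_right

lemma measurable_segmentOsc_apply (hG : StronglyMeasurable G) (a : E) :
    Measurable (segmentOsc G a) :=
  (measurable_segmentOsc hG).comp measurable_prodMk_left

lemma measurable_meanSegmentOsc {μ : Measure E} [SFinite μ] (hG : StronglyMeasurable G) (r : ℝ) :
    Measurable fun a => meanSegmentOsc μ G a r := by
  simp only [meanSegmentOsc, setLAverage_eq]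
  exact (measurable_segmentOsc hG).lintegral_prod_right.div_const _

variable {μ : Measure E} [μ.IsAddHaarMeasure]

lemma meanSegmentOsc_le {a : E} {r : ℝ} {ε : ℝ≥0∞} (hG : StronglyMeasurable G) (hr : 0 < r)
    (h : ∀ ρ, 0 < ρ → ρ ≤ r → ⨍⁻ y in closedBall a ρ, ‖G y - G a‖ₑ ∂μ ≤ ε) :
    meanSegmentOsc μ G a r ≤ ε := by
  have hmeas : Measurable fun y => ‖G y - G a‖ₑ := (hG.sub stronglyMeasurable_const).enorm
  have hswap : meanSegmentOsc μ G a r =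
      ∫⁻ s in Ioc (0 : ℝ) 1, ⨍⁻ v in closedBall (0 : E) r, ‖G (a + s • v) - G a‖ₑ ∂μ :=
    lintegral_lintegral_swap (hmeas.comp
      (show Measurable fun p : E × ℝ => a + p.2 • p.1 by fun_prop)).aemeasurable
  calc
    meanSegmentOsc μ G a r ≤ ∫⁻ _ in Ioc (0 : ℝ) 1, ε := by
      rw [hswap]
      refine setLIntegral_mono measurable_const fun s hs => ?_
      rw [setLAverage_closedBall_comp_add_smul hmeas a hs.1]
      exact h _ (mul_pos hs.1 hr) (mul_le_of_le_one_left hr.le hs.2)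
    _ = ε := by simp

theorem ae_tendsto_meanSegmentOsc (hG : StronglyMeasurable G) (hGi : Integrable G μ) :
    ∀ᵐ a ∂μ, Tendsto (meanSegmentOsc μ G a) (𝓝[>] 0) (𝓝 0) := by
  filter_upwards [(Besicovitch.vitaliFamily
    μ).ae_tendsto_lintegral_enorm_sub_div_of_integrable hGi] with a ha
  have hballs := ENNReal.tendsto_nhds_zero.1 (ha.comp (Besicovitch.tendsto_filterAt μ a))
  refine ENNReal.tendsto_nhds_zero.2 fun ε hε => ?_
  obtain ⟨ρ₀, hρ₀, hsmall⟩ := mem_nhdsGT_iff_exists_Ioo_subset.1 (hballs ε hε)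
  filter_upwards [Ioo_mem_nhdsGT hρ₀] with r hr
  refine meanSegmentOsc_le hG hr.1 fun ρ hρ hρr => ?_
  rw [setLAverage_eq]
  exact hsmall ⟨hρ, hρr.trans_lt hr.2⟩

end Oscillation

section Selection

lemma exists_mem_ae_le_setLAverage {α : Type*} [MeasurableSpace α] {μ : Measure α} {s : Set α}
    {g : α → ℝ≥0∞} {p : α → Prop} (hg : AEMeasurable g (μ.restrict s)) (hp : ∀ᵐ x ∂μ, p x)
    (hs : μ s ≠ 0) (hs' : μ s ≠ ∞) : ∃ x ∈ s, p x ∧ g x ≤ ⨍⁻ y in s, g y ∂μ := by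
  have hpos := measure_le_setLAverage_pos hs hs' hg
  obtain ⟨x, ⟨hxs, hle⟩, hpx⟩ := ((frequently_ae_iff.2 hpos.ne').and_eventually hp).exists
  exact ⟨x, hxs, hpx, hle⟩

variable {E : Type*} [NormedAddCommGroup E] [NormedSpace ℝ E] [FiniteDimensional ℝ E]
  [MeasurableSpace E] [BorelSpace E] {μ : Measure E} [μ.IsAddHaarMeasure]
  {V : Type*} [NormedAddCommGroup V] {G : E → V}

lemma setLAverage_segmentOsc_add_le {a x : E} {δ ρ : ℝ} (hG : StronglyMeasurable G) (hδ : 0 < δ)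
    (hxρ : ‖x‖ + δ ≤ ρ) :
    ⨍⁻ v in closedBall 0 δ, segmentOsc G a (x + v) ∂μ ≤
      ENNReal.ofReal ((ρ / δ) ^ finrank ℝ E) * meanSegmentOsc μ G a ρ := by
  have hshift := setLAverage_closedBall_comp_add_smul (μ := μ)
    (measurable_segmentOsc_apply hG a) x one_pos δ
  simp only [one_smul, one_mul] at hshift
  rw [hshift]
  refine setLAverage_closedBall_le_of_subset hδ ((by positivity : 0 ≤ ‖x‖ + δ).trans hxρ)
    (closedBall_subset_closedBall' ?_)
  rwa [dist_zero_right, add_comm]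

lemma exists_norm_le_segmentOsc_le {p : E → Prop} {y z : E} {δ ρ : ℝ} {θ ε : ℝ≥0∞}
    (hG : StronglyMeasurable G) (hp : ∀ᵐ v ∂μ, p v) (hδ : 0 < δ) (hρ : ‖y - z‖ + δ ≤ ρ)
    (hy : meanSegmentOsc μ G y ρ ≤ θ) (hz : meanSegmentOsc μ G z ρ ≤ θ)
    (hθ : 2 * (ENNReal.ofReal ((ρ / δ) ^ finrank ℝ E) * θ) ≤ ε) :
    ∃ v, ‖v‖ ≤ δ ∧ p v ∧ segmentOsc G y v ≤ ε ∧ segmentOsc G z (y - z + v) ≤ ε := by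
  have hmeas_y := measurable_segmentOsc_apply hG y
  have hmeas_z : Measurable fun v => segmentOsc G z (y - z + v) :=
    (measurable_segmentOsc_apply hG z).comp (by fun_prop)
  obtain ⟨v, hv, hpv, hle⟩ :=
    exists_mem_ae_le_setLAverage (hmeas_y.add hmeas_z).aemeasurable hp
      (measure_closedBall_pos μ (0 : E) hδ).ne' measure_closedBall_lt_top.ne
  have hmean_y : ⨍⁻ v in closedBall 0 δ, segmentOsc G y v ∂μ ≤
      ENNReal.ofReal ((ρ / δ) ^ finrank ℝ E) * θ := by
    have hδρ : ‖(0 : E)‖ + δ ≤ ρ := by rw [norm_zero]; linarith [norm_nonneg (y - z)]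
    simpa only [zero_add] using
      (setLAverage_segmentOsc_add_le hG hδ hδρ).trans (mul_le_mul_right hy _)
  have hmean_z := (setLAverage_segmentOsc_add_le hG hδ hρ).trans (mul_le_mul_right hz
    (ENNReal.ofReal ((ρ / δ) ^ finrank ℝ E)))
  have hsum : segmentOsc G y v + segmentOsc G z (y - z + v) ≤ ε := by
    refine (hle.trans (le_of_eq ?_)).trans ((add_le_add hmean_y hmean_z).trans ?_)
    · exact lintegral_add_left hmeas_y _
    · rwa [← two_mul]
  exact ⟨v, mem_closedBall_zero_iff.1 hv, hpv, le_self_add.trans hsum, le_add_self.trans hsum⟩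

end Selection

section TwoSegments

variable {E : Type*} [NormedAddCommGroup E] [NormedSpace ℝ E] {n : ℕ} {F : E → Heis n}
  {G : E → E →L[ℝ] Heis n} {y z v : E} {ε L : ℝ}

lemma IsHorizontalSegment.integral_norm_sub_le (h : IsHorizontalSegment F G y v) (hε : 0 ≤ ε)
    (hosc : segmentOsc G y v ≤ ENNReal.ofReal ε) :
    ∫ s in (0 : ℝ)..1, ‖G (y + s • v) - G y‖ ≤ ε := by
  have hint : IntervalIntegrable (fun s : ℝ => G (y + s • v) - G y) volume 0 1 :=
    h.intervalIntegrable.sub intervalIntegrable_const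
  rw [intervalIntegral.integral_of_le zero_le_one,
    integral_norm_eq_lintegral_enorm hint.1.aestronglyMeasurable]
  exact ENNReal.toReal_le_of_le_ofReal hε hosc

/-- The points `y` and `z` are joined to the common point `y + v` by horizontal segments over which
`G` has mean oscillation at most `ε`, and `v` is short compared with `y - z`. -/
structure IsGoodDetour (F : E → Heis n) (G : E → E →L[ℝ] Heis n) (ε : ℝ) (y z v : E) : Prop where
  norm_le : ‖v‖ ≤ ε * ‖y - z‖
  left : IsHorizontalSegment F G y v
  right : IsHorizontalSegment F G z (y - z + v)
  segmentOsc_left : segmentOsc G y v ≤ ENNReal.ofReal ε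
  segmentOsc_right : segmentOsc G z (y - z + v) ≤ ENNReal.ofReal ε

namespace IsGoodDetour

lemma norm_right_le (h : IsGoodDetour F G ε y z v) (hε1 : ε ≤ 1) :
    ‖y - z + v‖ ≤ 2 * ‖y - z‖ := by
  have := h.norm_le.trans (mul_le_of_le_one_left (norm_nonneg _) hε1)
  linarith [norm_add_le (y - z) v]

lemma norm_sub_sub_left_le (h : IsGoodDetour F G ε y z v) (hε : 0 ≤ ε) (hε1 : ε ≤ 1) :
    ‖F (y + v) - F y - G y v‖ ≤ ε * ‖y - z‖ :=
  (h.left.norm_sub_le (G y)).trans <| mul_le_mul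
    (h.left.integral_norm_sub_le hε h.segmentOsc_left)
    (h.norm_le.trans (mul_le_of_le_one_left (norm_nonneg _) hε1)) (norm_nonneg v) hε

lemma norm_sub_sub_right_le (h : IsGoodDetour F G ε y z v) (hε : 0 ≤ ε) (hε1 : ε ≤ 1) :
    ‖F (y + v) - F z - G z (y - z + v)‖ ≤ ε * (2 * ‖y - z‖) := by
  have hend := h.right.norm_sub_le (G z)
  rw [show z + (y - z + v) = y + v by abel] at hend
  exact hend.trans <| mul_le_mul (h.right.integral_norm_sub_le hε h.segmentOsc_right)
    (h.norm_right_le hε1) (norm_nonneg _) hε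

lemma norm_sub_sub_apply_le (h : IsGoodDetour F G ε y z v) (hε : 0 ≤ ε) (hε1 : ε ≤ 1)
    (hLy : ‖G y‖ ≤ L) (hLz : ‖G z‖ ≤ L) :
    ‖F y - F z - G z (y - z)‖ ≤ (2 * L + 3) * ε * ‖y - z‖ := by
  have hGy : ‖G y v‖ ≤ L * (ε * ‖y - z‖) := (G y).le_of_opNorm_le_of_le hLy h.norm_le
  have hGz : ‖G z v‖ ≤ L * (ε * ‖y - z‖) := (G z).le_of_opNorm_le_of_le hLz h.norm_le
  have hsplit : F y - F z - G z (y - z) =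
      (F (y + v) - F z - G z (y - z + v)) - (F (y + v) - F y - G y v) + (G z v - G y v) := by
    rw [map_add]; abel
  calc
    ‖F y - F z - G z (y - z)‖
      ≤ ‖F (y + v) - F z - G z (y - z + v)‖ + ‖F (y + v) - F y - G y v‖ + (‖G z v‖ + ‖G y v‖) := by
        rw [hsplit]
        exact (norm_add_le _ _).trans (add_le_add (norm_sub_le _ _) (norm_sub_le _ _))
    _ ≤ ε * (2 * ‖y - z‖) + ε * ‖y - z‖ + (L * (ε * ‖y - z‖) + L * (ε * ‖y - z‖)) :=
        add_le_add (add_le_add (h.norm_sub_sub_right_le hε hε1) (h.norm_sub_sub_left_le hε hε1))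
          (add_le_add hGz hGy)
    _ = (2 * L + 3) * ε * ‖y - z‖ := by ring

lemma abs_inner_sympJ_sub_le (h : IsGoodDetour F G ε y z v) (hε : 0 ≤ ε) (hε1 : ε ≤ 1)
    (hLy : ‖G y‖ ≤ L) (hLz : ‖G z‖ ≤ L) :
    |inner ℝ (sympJ n (F (y + v) - F y)) (F z - F y)| ≤
      ‖sympJ n‖ * (3 * (L + 1) ^ 2 * ε) * ‖y - z‖ ^ 2 := by
  have hL : 0 ≤ L := (norm_nonneg _).trans hLy
  have hGy : ‖G y v‖ ≤ L * (ε * ‖y - z‖) := (G y).le_of_opNorm_le_of_le hLy h.norm_le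
  have hGz : ‖G z (y - z)‖ ≤ L * ‖y - z‖ := (G z).le_of_opNorm_le_of_le hLz le_rfl
  have hvert : ‖F (y + v) - F y‖ ≤ (L + 1) * ε * ‖y - z‖ := by
    have := norm_le_norm_sub_add (F (y + v) - F y) (G y v)
    linarith [h.norm_sub_sub_left_le hε hε1]
  have hbase : ‖F z - F y‖ ≤ 3 * (L + 1) * ‖y - z‖ := by
    have hε_le : (2 * L + 3) * ε * ‖y - z‖ ≤ (2 * L + 3) * 1 * ‖y - z‖ := by gcongr
    have := norm_le_norm_sub_add (F y - F z) (G z (y - z))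
    rw [norm_sub_rev]
    linarith [h.norm_sub_sub_apply_le hε hε1 hLy hLz]
  calc
    |inner ℝ (sympJ n (F (y + v) - F y)) (F z - F y)|
      ≤ ‖sympJ n‖ * ((L + 1) * ε * ‖y - z‖) * (3 * (L + 1) * ‖y - z‖) :=
        (abs_inner_sympJ_le _ _).trans (by gcongr)
    _ = ‖sympJ n‖ * (3 * (L + 1) ^ 2 * ε) * ‖y - z‖ ^ 2 := by ring

end IsGoodDetour

lemma IsHorizontalSegment.abs_height_le_of_segmentOsc_le (h : IsHorizontalSegment F G y v)
    (hε : 0 ≤ ε) (hε1 : ε ≤ 1) (hosc : segmentOsc G y v ≤ ENNReal.ofReal ε) (hLy : ‖G y‖ ≤ L) :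
    |height (F (y + v)) (F y)| ≤ ‖sympJ n‖ * (2 * (2 * L + 1) * ε) * ‖v‖ ^ 2 := by
  refine (h.abs_height_le (G y) rfl).trans ?_
  set ω := ∫ s in (0 : ℝ)..1, ‖G (y + s • v) - G y‖
  have hω0 : 0 ≤ ω := intervalIntegral.integral_nonneg zero_le_one fun s _ => norm_nonneg _
  have hωε : ω ≤ ε := h.integral_norm_sub_le hε hosc
  have hL : 0 ≤ L := (norm_nonneg _).trans hLy
  have hbound : 2 * ‖G y‖ * ω + ω ^ 2 ≤ (2 * L + 1) * ε := by
    calc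
      2 * ‖G y‖ * ω + ω ^ 2 ≤ 2 * L * ε + ε * 1 := by
        rw [sq]; gcongr; exact hωε.trans hε1
      _ = (2 * L + 1) * ε := by ring
  calc
    2 * ‖sympJ n‖ * (2 * ‖G y‖ * ω + ω ^ 2) * ‖v‖ ^ 2
      ≤ 2 * ‖sympJ n‖ * ((2 * L + 1) * ε) * ‖v‖ ^ 2 := by gcongr
    _ = ‖sympJ n‖ * (2 * (2 * L + 1) * ε) * ‖v‖ ^ 2 := by ring

lemma IsGoodDetour.abs_height_le (h : IsGoodDetour F G ε y z v) (hε : 0 ≤ ε) (hε1 : ε ≤ 1)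
    (hLy : ‖G y‖ ≤ L) (hLz : ‖G z‖ ≤ L) :
    |height (F y) (F z)| ≤
      ‖sympJ n‖ * (10 * (2 * L + 1) + 6 * (L + 1) ^ 2) * ε * ‖y - z‖ ^ 2 := by
  have hL : 0 ≤ L := (norm_nonneg _).trans hLy
  have hv : ‖v‖ ≤ ‖y - z‖ := h.norm_le.trans (mul_le_of_le_one_left (norm_nonneg _) hε1)
  have hy : |height (F (y + v)) (F y)| ≤ ‖sympJ n‖ * (2 * (2 * L + 1) * ε) * ‖y - z‖ ^ 2 :=
    (h.left.abs_height_le_of_segmentOsc_le hε hε1 h.segmentOsc_left hLy).trans (by gcongr)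
  have hz : |height (F (y + v)) (F z)| ≤
      ‖sympJ n‖ * (2 * (2 * L + 1) * ε) * (2 * ‖y - z‖) ^ 2 := by
    have hseg := h.right.abs_height_le_of_segmentOsc_le hε hε1 h.segmentOsc_right hLz
    rw [show z + (y - z + v) = y + v by abel] at hseg
    refine hseg.trans ?_
    gcongr
    exact h.norm_right_le hε1
  have htri := height_add_height_add_height (F z) (F (y + v)) (F y)
  have hinner := h.abs_inner_sympJ_sub_le hε hε1 hLy hLz
  have hsplit : height (F y) (F z) = 2 * inner ℝ (sympJ n (F (y + v) - F y)) (F z - F y) +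
      height (F (y + v)) (F z) - height (F (y + v)) (F y) := by
    rw [height_comm (F z) (F (y + v))] at htri
    linarith
  rw [abs_le] at hy hz hinner ⊢
  constructor <;> linarith

end TwoSegments

section ContactDifferentiability

lemma isLittleO_of_forall_eventually_norm_le_mul {α A B : Type*} [Norm A]
    [SeminormedAddGroup B] {l : Filter α} {f : α → A} {g : α → B} (K : ℝ)
    (h : ∀ ε ∈ Ioc (0 : ℝ) 1, ∀ᶠ x in l, ‖f x‖ ≤ K * ε * ‖g x‖) : f =o[l] g := by
  refine isLittleO_iff.2 fun c hc => ?_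
  have hK : 0 < |K| + 1 := by positivity
  filter_upwards [h (min 1 (c / (|K| + 1))) ⟨by positivity, min_le_left _ _⟩] with x hx
  refine hx.trans (mul_le_mul_of_nonneg_right ?_ (norm_nonneg _))
  calc
    K * min 1 (c / (|K| + 1)) ≤ (|K| + 1) * (c / (|K| + 1)) := by
      gcongr
      · exact (le_abs_self K).trans (lt_add_one _).le
      · exact min_le_right _ _
    _ = c := mul_div_cancel₀ c hK.ne'

variable {E : Type*} [NormedAddCommGroup E] [NormedSpace ℝ E] {n : ℕ} {F : E → Heis n}
  {G : E → E →L[ℝ] Heis n} {S T : Set E}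

/-- Uniform differentiability of `F` on `S` with derivative `G` at the contact scale: Euclidean
displacements are linear to first order and heights vanish to second order. -/
structure ContactDifferentiableOn (F : E → Heis n) (G : E → E →L[ℝ] Heis n) (S : Set E) :
    Prop where
  isLittleO_sub : (fun p : E × E => F p.1 - F p.2 - G p.2 (p.1 - p.2)) =o[𝓤 E ⊓ 𝓟 (S ×ˢ S)]
    fun p => p.1 - p.2
  isLittleO_height : (fun p : E × E => height (F p.1) (F p.2)) =o[𝓤 E ⊓ 𝓟 (S ×ˢ S)]
    fun p => ‖p.1 - p.2‖ ^ 2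

lemma ContactDifferentiableOn.mono (h : ContactDifferentiableOn F G S) (hTS : T ⊆ S) :
    ContactDifferentiableOn F G T :=
  have hle : 𝓤 E ⊓ 𝓟 (T ×ˢ T) ≤ 𝓤 E ⊓ 𝓟 (S ×ˢ S) :=
    inf_le_inf_left _ (principal_mono.2 (prod_mono hTS hTS))
  ⟨h.isLittleO_sub.mono hle, h.isLittleO_height.mono hle⟩

lemma contactDifferentiableOn_of_isGoodDetour {L : ℝ} (hL : ∀ a ∈ S, ‖G a‖ ≤ L)
    (h : ∀ ε ∈ Ioc (0 : ℝ) 1, ∀ᶠ p in 𝓤 E ⊓ 𝓟 (S ×ˢ S), p.1 ≠ p.2 →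
      ∃ v, IsGoodDetour F G ε p.1 p.2 v) :
    ContactDifferentiableOn F G S := by
  have hS : ∀ᶠ p in 𝓤 E ⊓ 𝓟 (S ×ˢ S), p ∈ S ×ˢ S := mem_inf_of_right (mem_principal_self _)
  constructor
  · refine isLittleO_of_forall_eventually_norm_le_mul (2 * L + 3)
      fun ε hε => ?_
    filter_upwards [h ε hε, hS] with p hp hpS
    rcases eq_or_ne p.1 p.2 with heq | hne
    · simp [heq]
    · obtain ⟨v, hv⟩ := hp hne
      exact hv.norm_sub_sub_apply_le hε.1.le hε.2 (hL _ hpS.1) (hL _ hpS.2)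
  · refine isLittleO_of_forall_eventually_norm_le_mul
      (‖sympJ n‖ * (10 * (2 * L + 1) + 6 * (L + 1) ^ 2)) fun ε hε => ?_
    filter_upwards [h ε hε, hS] with p hp hpS
    rcases eq_or_ne p.1 p.2 with heq | hne
    · simp [heq, height]
    · obtain ⟨v, hv⟩ := hp hne
      rw [Real.norm_eq_abs, norm_pow, norm_norm]
      exact hv.abs_height_le hε.1.le hε.2 (hL _ hpS.1) (hL _ hpS.2)

variable [FiniteDimensional ℝ E] [MeasurableSpace E] [BorelSpace E] {μ : Measure E}
  [μ.IsAddHaarMeasure]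

lemma meanSegmentOsc_le_of_le_two_mul {V : Type*} [NormedAddCommGroup V] {H : E → V} {a : E}
    {r ρ : ℝ} (hr : 0 < r) (hrρ : r ≤ ρ) (hρ : ρ ≤ 2 * r) :
    meanSegmentOsc μ H a r ≤ ENNReal.ofReal (2 ^ finrank ℝ E) * meanSegmentOsc μ H a ρ := by
  refine (setLAverage_closedBall_le_of_subset hr (hr.le.trans hrρ)
    (closedBall_subset_closedBall hrρ)).trans ?_
  gcongr
  · exact div_nonneg (hr.le.trans hrρ) hr.le
  · exact (div_le_iff₀ hr).2 hρ
  · exact le_rfl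

lemma eventually_forall_meanSegmentOsc_le {V : Type*} [NormedAddCommGroup V] {H : E → V}
    (h : ∀ θ ≠ 0, ∀ᶠ m : ℕ in atTop, ∀ a ∈ S, meanSegmentOsc μ H a ((1 / 2) ^ m) ≤ θ)
    {θ : ℝ≥0∞} (hθ : θ ≠ 0) : ∀ᶠ r in 𝓝[>] 0, ∀ a ∈ S, meanSegmentOsc μ H a r ≤ θ := by
  have hc : ENNReal.ofReal (2 ^ finrank ℝ E) ≠ 0 := by positivity
  obtain ⟨m₀, hm₀⟩ := eventually_atTop.1 (h (θ / ENNReal.ofReal (2 ^ finrank ℝ E))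
    (ENNReal.div_ne_zero.2 ⟨hθ, ENNReal.ofReal_ne_top⟩))
  have hpow : (0 : ℝ) < (1 / 2) ^ m₀ := by positivity
  filter_upwards [Ioo_mem_nhdsGT hpow] with r hr a ha
  obtain ⟨m, hmr, hrm⟩ := exists_nat_pow_near_of_lt_one hr.1
    (hr.2.le.trans (pow_le_one₀ (by norm_num) (by norm_num))) (y := (1 / 2 : ℝ)) (by norm_num)
    (by norm_num)
  have hm : m₀ ≤ m := Nat.lt_succ_iff.1 <|
    (pow_lt_pow_iff_right_of_lt_one₀ (by norm_num) (by norm_num)).1 (hmr.trans hr.2)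
  calc
    meanSegmentOsc μ H a r
      ≤ ENNReal.ofReal (2 ^ finrank ℝ E) * meanSegmentOsc μ H a ((1 / 2) ^ m) :=
        meanSegmentOsc_le_of_le_two_mul hr.1 hrm (by rw [pow_succ] at hmr; linarith)
    _ ≤ ENNReal.ofReal (2 ^ finrank ℝ E) * (θ / ENNReal.ofReal (2 ^ finrank ℝ E)) := by
        gcongr
        exact hm₀ m hm a ha
    _ = θ := ENNReal.mul_div_cancel hc ENNReal.ofReal_ne_top

lemma exists_isGoodDetour {y z : E} {ε R : ℝ} {θ : ℝ≥0∞} (hG : StronglyMeasurable G)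
    (hε : ε ∈ Ioc (0 : ℝ) 1) (hyz : y ≠ z) (hR : 2 * ‖y - z‖ < R)
    (hsegy : ∀ᵐ v ∂μ, ‖v‖ < R → IsHorizontalSegment F G y v)
    (hsegz : ∀ᵐ v ∂μ, ‖v‖ < R → IsHorizontalSegment F G z v)
    (hoscy : meanSegmentOsc μ G y (2 * ‖y - z‖) ≤ θ)
    (hoscz : meanSegmentOsc μ G z (2 * ‖y - z‖) ≤ θ)
    (hθ : 2 * (ENNReal.ofReal ((2 / ε) ^ finrank ℝ E) * θ) ≤ ENNReal.ofReal ε) :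
    ∃ v, IsGoodDetour F G ε y z v := by
  have hr : 0 < ‖y - z‖ := norm_pos_iff.2 (sub_ne_zero.2 hyz)
  have hεr : ε * ‖y - z‖ ≤ ‖y - z‖ := mul_le_of_le_one_left hr.le hε.2
  have hseg : ∀ᵐ v ∂μ, (‖v‖ < R → IsHorizontalSegment F G y v) ∧
      (‖y - z + v‖ < R → IsHorizontalSegment F G z (y - z + v)) :=
    hsegy.and ((measurePreserving_add_left μ (y - z)).quasiMeasurePreserving.ae hsegz)
  rw [← mul_div_mul_right _ _ hr.ne'] at hθ
  obtain ⟨v, hv, ⟨hy, hz⟩, hvy, hvz⟩ := exists_norm_le_segmentOsc_le hG hseg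
    (mul_pos hε.1 hr) (by linarith) hoscy hoscz hθ
  refine ⟨v, hv, hy ?_, hz ?_, hvy, hvz⟩
  · linarith
  · linarith [norm_add_le (y - z) v]

theorem contactDifferentiableOn_of_meanSegmentOsc_le (hG : StronglyMeasurable G) {L R : ℝ}
    (hR : 0 < R) (hL : ∀ a ∈ S, ‖G a‖ ≤ L)
    (hseg : ∀ a ∈ S, ∀ᵐ v ∂μ, ‖v‖ < R → IsHorizontalSegment F G a v)
    (hosc : ∀ θ ≠ 0, ∀ᶠ r in 𝓝[>] 0, ∀ a ∈ S, meanSegmentOsc μ G a r ≤ θ) :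
    ContactDifferentiableOn F G S := by
  refine contactDifferentiableOn_of_isGoodDetour hL fun ε hε => ?_
  obtain ⟨θ, hθ0, hθ⟩ : ∃ θ : ℝ≥0∞, θ ≠ 0 ∧
      2 * (ENNReal.ofReal ((2 / ε) ^ finrank ℝ E) * θ) ≤ ENNReal.ofReal ε := by
    have hc : 2 * ENNReal.ofReal ((2 / ε) ^ finrank ℝ E) ≠ ∞ := by finiteness
    refine ⟨ENNReal.ofReal ε / (2 * ENNReal.ofReal ((2 / ε) ^ finrank ℝ E)),
      ENNReal.div_ne_zero.2 ⟨(ENNReal.ofReal_pos.2 hε.1).ne', hc⟩, ?_⟩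
    rw [← mul_assoc]
    exact ENNReal.mul_div_le
  obtain ⟨r₀, hr₀, hosc⟩ := mem_nhdsGT_iff_exists_Ioo_subset.1 (hosc θ hθ0)
  refine eventually_inf_principal.2 <| uniformity_basis_dist.eventually_iff.2
    ⟨min r₀ R / 2, half_pos (lt_min hr₀ hR), fun ⟨y, z⟩ hyz hS hne => ?_⟩
  have hyz' : 2 * ‖y - z‖ < min r₀ R := by
    rw [← dist_eq_norm]
    linarith [show dist y z < min r₀ R / 2 from hyz]
  have hsmall := hosc ⟨mul_pos two_pos (norm_pos_iff.2 (sub_ne_zero.2 hne)),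
    hyz'.trans_le (min_le_left _ _)⟩
  exact exists_isGoodDetour hG hε hne (hyz'.trans_le (min_le_right _ _)) (hseg y hS.1)
    (hseg z hS.2) (hsmall y hS.1) (hsmall z hS.2) hθ

end ContactDifferentiability

section Isotropy

variable {E : Type*} [NormedAddCommGroup E] [NormedSpace ℝ E] {x u v : E} {S : Set E}

section BlowUp

variable {α : Type*} {l : Filter α} {r : α → ℝ} {w w' : α → E}

lemma tendsto_add_smul_add_smul (hr : Tendsto r l (𝓝 0)) (hw : Tendsto w l (𝓝 u))
    (hw' : Tendsto w' l (𝓝 v)) (hS : ∀ᶠ i in l, x + r i • w i ∈ S)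
    (hS' : ∀ᶠ i in l, x + r i • w' i ∈ S) :
    Tendsto (fun i => (x + r i • w i, x + r i • w' i)) l (𝓤 E ⊓ 𝓟 (S ×ˢ S)) := by
  refine tendsto_inf.2 ⟨?_, tendsto_principal.2 (hS.and hS')⟩
  have hlim := ((hr.smul hw).const_add x).prodMk_nhds ((hr.smul hw').const_add x)
  rw [zero_smul, zero_smul, add_zero] at hlim
  exact hlim.mono_right (nhds_le_uniformity x)

variable {n : ℕ} {F : E → Heis n} {G : E → E →L[ℝ] Heis n}

namespace ContactDifferentiableOn

lemma tendsto_inv_smul_sub (h : ContactDifferentiableOn F G S) (hx : x ∈ S)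
    (hr : Tendsto r l (𝓝[≠] 0)) (hw : Tendsto w l (𝓝 u)) (hS : ∀ᶠ i in l, x + r i • w i ∈ S) :
    Tendsto (fun i => (r i)⁻¹ • (F (x + r i • w i) - F x)) l (𝓝 (G x u)) := by
  obtain ⟨hr, hr0⟩ := tendsto_nhdsWithin_iff.1 hr
  have hpair := tendsto_add_smul_add_smul (S := S) hr hw (tendsto_const_nhds (x := (0 : E))) hS
    (Eventually.of_forall fun i => by simpa using hx)
  have hrw : (fun i => r i • w i) =O[l] r := by
    simpa using (isBigO_refl r l).smul (hw.isBigO_one ℝ)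
  have hlittle := h.isLittleO_sub.comp_tendsto hpair
  simp only [Function.comp_def, smul_zero, add_zero, add_sub_cancel_left] at hlittle
  have hlim := (hlittle.trans_isBigO hrw).tendsto_inv_smul_nhds_zero.add
    (((G x).continuous.tendsto u).comp hw)
  rw [zero_add] at hlim
  refine hlim.congr' (hr0.mono fun i hi => ?_)
  rw [Function.comp_apply, map_smul, smul_sub _ (F _ - F x), inv_smul_smul₀ hi, sub_add_cancel]

lemma tendsto_height_div_sq (h : ContactDifferentiableOn F G S) (hr : Tendsto r l (𝓝 0))
    (hw : Tendsto w l (𝓝 u)) (hw' : Tendsto w' l (𝓝 v)) (hS : ∀ᶠ i in l, x + r i • w i ∈ S)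
    (hS' : ∀ᶠ i in l, x + r i • w' i ∈ S) :
    Tendsto (fun i => height (F (x + r i • w i)) (F (x + r i • w' i)) / r i ^ 2) l (𝓝 0) := by
  have hdist : (fun i => r i • (w i - w' i)) =O[l] r := by
    simpa using (isBigO_refl r l).smul ((hw.sub hw').isBigO_one ℝ)
  refine IsLittleO.tendsto_div_nhds_zero <| (h.isLittleO_height.comp_tendsto
    (tendsto_add_smul_add_smul hr hw hw' hS hS')).trans_isBigO ?_
  simpa [Function.comp_def, smul_sub] using hdist.norm_left.pow 2

end ContactDifferentiableOn

end BlowUp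

variable [FiniteDimensional ℝ E] [MeasurableSpace E] [BorelSpace E] {μ : Measure E}
  [μ.IsAddHaarMeasure]

lemma eventually_exists_add_smul_mem_of_density_one
    (hx : Tendsto (fun r => μ (S ∩ closedBall x r) / μ (closedBall x r)) (𝓝[>] 0) (𝓝 1))
    {t : Set E} (ht : t ∈ 𝓝 u) : ∀ᶠ r in 𝓝[>] (0 : ℝ), ∃ w ∈ t, x + r • w ∈ S := by
  obtain ⟨η, hη, hball⟩ := nhds_basis_closedBall.mem_iff.1 ht
  filter_upwards [Measure.eventually_nonempty_inter_smul_of_density_one μ S x hx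
    (closedBall u η) measurableSet_closedBall (measure_closedBall_pos μ u hη).ne'] with r hr
  obtain ⟨y, hyS, hy⟩ := hr
  rw [singleton_add, mem_image] at hy
  obtain ⟨_, ⟨w, hw, rfl⟩, rfl⟩ := hy
  exact ⟨w, hball hw, hyS⟩

lemma frequently_add_smul_mem_of_density_one
    (hx : Tendsto (fun r => μ (S ∩ closedBall x r) / μ (closedBall x r)) (𝓝[>] 0) (𝓝 1))
    (u v : E) : ∃ᶠ p : ℝ × E × E in 𝓝[>] 0 ×ˢ 𝓝 u ×ˢ 𝓝 v,
      x + p.1 • p.2.1 ∈ S ∧ x + p.1 • p.2.2 ∈ S := by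
  intro hevent
  obtain ⟨A, hA, B, hB, hAB⟩ := mem_prod_iff.1 hevent
  obtain ⟨t, ht, t', ht', htt'⟩ := mem_prod_iff.1 hB
  obtain ⟨r, hrA, ⟨w, hw, hwS⟩, w', hw', hwS'⟩ := (Eventually.and hA
    ((eventually_exists_add_smul_mem_of_density_one hx ht).and
      (eventually_exists_add_smul_mem_of_density_one hx ht'))).exists
  exact hAB (mk_mem_prod hrA (htt' (mk_mem_prod hw hw'))) ⟨hwS, hwS'⟩

variable {n : ℕ} {F : E → Heis n} {G : E → E →L[ℝ] Heis n}

theorem ContactDifferentiableOn.inner_sympJ_eq_zero (h : ContactDifferentiableOn F G S)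
    (hxS : x ∈ S)
    (hx : Tendsto (fun r => μ (S ∩ closedBall x r) / μ (closedBall x r)) (𝓝[>] 0) (𝓝 1))
    (u v : E) : inner ℝ (sympJ n (G x u)) (G x v) = 0 := by
  set l : Filter (ℝ × E × E) := (𝓝[>] 0 ×ˢ 𝓝 u ×ˢ 𝓝 v) ⊓
    𝓟 {p | x + p.1 • p.2.1 ∈ S ∧ x + p.1 • p.2.2 ∈ S}
  have : l.NeBot := frequently_mem_iff_neBot.1 (frequently_add_smul_mem_of_density_one hx u v)
  have hr : Tendsto (fun p : ℝ × E × E => p.1) l (𝓝[≠] 0) :=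
    (tendsto_fst.mono_left inf_le_left).mono_right (nhdsWithin_mono 0 fun r hr => ne_of_gt hr)
  have hw : Tendsto (fun p : ℝ × E × E => p.2.1) l (𝓝 u) :=
    (tendsto_fst.comp tendsto_snd).mono_left inf_le_left
  have hw' : Tendsto (fun p : ℝ × E × E => p.2.2) l (𝓝 v) :=
    (tendsto_snd.comp tendsto_snd).mono_left inf_le_left
  obtain ⟨hS, hS'⟩ : (∀ᶠ p in l, x + p.1 • p.2.1 ∈ S) ∧ ∀ᶠ p in l, x + p.1 • p.2.2 ∈ S :=
    eventually_and.1 (mem_inf_of_right (mem_principal_self _))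
  have hS₀ : ∀ᶠ p in l, x + p.1 • (0 : E) ∈ S := Eventually.of_forall fun p => by simpa using hxS
  have hr' := (tendsto_nhdsWithin_iff.1 hr).1
  have hzero := tendsto_const_nhds (x := (0 : E)) (f := l)
  have hheights := ((h.tendsto_height_div_sq hr' hw' hw hS' hS).add
    (h.tendsto_height_div_sq hr' hw hzero hS hS₀)).add
    (h.tendsto_height_div_sq hr' hzero hw' hS₀ hS')
  have hinner := (((sympJ n).continuous.tendsto _).comp
    (h.tendsto_inv_smul_sub hxS hr hw hS)).inner (𝕜 := ℝ)
    (h.tendsto_inv_smul_sub hxS hr hw' hS')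
  have hlim := tendsto_nhds_unique (hheights.congr fun p => ?_) (hinner.const_mul 2)
  · linarith
  · rw [← add_div, ← add_div, height_add_height_add_height, smul_zero, add_zero,
      Function.comp_apply, map_smul, real_inner_smul_left, real_inner_smul_right]
    ring

lemma ContactDifferentiableOn.finrank_range_le (h : ContactDifferentiableOn F G S)
    (hxS : x ∈ S)
    (hx : Tendsto (fun r => μ (S ∩ closedBall x r) / μ (closedBall x r)) (𝓝[>] 0) (𝓝 1))
    (hcontact : ∀ v, G x v ∈ kerAlpha n (F x)) : finrank ℝ (G x).range ≤ n := by
  refine finrank_le_of_isotropic (p := F x) ?_ ?_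
  · rintro _ ⟨v, rfl⟩
    exact hcontact v
  · rintro _ ⟨u, rfl⟩ _ ⟨v, rfl⟩
    exact h.inner_sympJ_eq_zero hxS hx u v

end Isotropy

section HausdorffNull

variable {n k : ℕ} {S T : Set (Heis n)}

lemma kDiam_empty : kDiam n ∅ = 0 := by
  simp [kDiam]

lemma kDiam_le_of_forall_dK_le {δ : ℝ} (h : ∀ p ∈ S, ∀ q ∈ S, dK n p q ≤ δ) :
    kDiam n S ≤ ENNReal.ofReal δ :=
  iSup₂_le fun p hp => iSup₂_le fun q hq => ENNReal.ofReal_le_ofReal (h p hp q hq)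

lemma IsHausdorffNullK.mono (h : S ⊆ T) (hT : IsHausdorffNullK n k T) :
    IsHausdorffNullK n k S := fun ε hε =>
  let ⟨U, hU, hs⟩ := hT ε hε
  ⟨U, h.trans hU, hs⟩

lemma exists_seq_iUnion_eq_tsum_kDiam_pow_eq (hk : k ≠ 0) {ι : Type*} [Countable ι]
    (U : ι → Set (Heis n)) : ∃ V : ℕ → Set (Heis n), ⋃ j, V j = ⋃ i, U i ∧
      ∑' j, kDiam n (V j) ^ k = ∑' i, kDiam n (U i) ^ k := by
  have := Encodable.ofCountable ι
  exact ⟨fun j => ⋃ i ∈ Encodable.decode₂ ι j, U i, Encodable.iUnion_decode₂ U,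
    tsum_iUnion_decode₂ (fun V => kDiam n V ^ k) (by simp [kDiam_empty, hk]) U⟩

lemma isHausdorffNullK_iUnion (hk : k ≠ 0) {ι : Type*} [Countable ι] {S : ι → Set (Heis n)}
    (h : ∀ i, IsHausdorffNullK n k (S i)) : IsHausdorffNullK n k (⋃ i, S i) := by
  intro ε hε
  obtain ⟨δ, hδ, hδs⟩ := ENNReal.exists_pos_sum_of_countable' hε.ne' ι
  choose U hU hs using fun i => h i (δ i) (hδ i)
  obtain ⟨V, hV, hVs⟩ := exists_seq_iUnion_eq_tsum_kDiam_pow_eq hk fun p : ι × ℕ => U p.1 p.2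
  refine ⟨V, ?_, ?_⟩
  · rw [hV, iUnion_prod']
    exact iUnion_mono hU
  · rw [hVs, ENNReal.tsum_prod (f := fun i j => kDiam n (U i j) ^ k)]
    exact (ENNReal.tsum_le_tsum fun i => (hs i).le).trans_lt hδs

lemma IsHausdorffNullK.union (hk : k ≠ 0) (hS : IsHausdorffNullK n k S)
    (hT : IsHausdorffNullK n k T) : IsHausdorffNullK n k (S ∪ T) := by
  rw [union_eq_iUnion]
  exact isHausdorffNullK_iUnion hk fun b => by cases b <;> assumption

lemma isHausdorffNullK_of_finite_cover (hk : k ≠ 0)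
    (h : ∀ ε : ℝ, 0 < ε → ∃ (𝒰 : Finset (Set (Heis n))) (δ : ℝ), 0 ≤ δ ∧ S ⊆ ⋃ U ∈ 𝒰, U ∧
      (∀ U ∈ 𝒰, ∀ p ∈ U, ∀ q ∈ U, dK n p q ≤ δ) ∧ 𝒰.card * δ ^ k ≤ ε) :
    IsHausdorffNullK n k S := by
  intro ε hε
  obtain ⟨ε', -, hε', hlt⟩ := ENNReal.lt_iff_exists_real_btwn.1 hε
  obtain ⟨𝒰, δ, hδ, hcover, hdK, hcard⟩ := h ε' (by simpa using hε')
  obtain ⟨V, hV, hVs⟩ := exists_seq_iUnion_eq_tsum_kDiam_pow_eq hk ((↑) : 𝒰 → Set (Heis n))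
  refine ⟨V, ?_, hVs.trans_lt (lt_of_le_of_lt ?_ hlt)⟩
  · rw [hV, iUnion_subtype]
    exact hcover
  · calc
      ∑' U : 𝒰, kDiam n U ^ k ≤ ∑' _ : 𝒰, ENNReal.ofReal (δ ^ k) :=
        ENNReal.tsum_le_tsum fun U => by
          rw [ENNReal.ofReal_pow hδ]
          gcongr
          exact kDiam_le_of_forall_dK_le (hdK U U.2)
      _ = ENNReal.ofReal (𝒰.card * δ ^ k) := by
        rw [tsum_fintype, Finset.sum_const, Finset.card_univ, Fintype.card_coe, nsmul_eq_mul,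
          ENNReal.ofReal_mul (by positivity), ENNReal.ofReal_natCast]
      _ ≤ ENNReal.ofReal ε' := ENNReal.ofReal_le_ofReal hcard

end HausdorffNull

section Covering

variable {E : Type*} [NormedAddCommGroup E] [NormedSpace ℝ E]

section Counting

variable {c : E} {R ε : ℝ}

lemma card_le_of_pairwise_le_dist [FiniteDimensional ℝ E] {s : Finset E}
    (hs : (s : Set E) ⊆ closedBall c R) (hR : 0 ≤ R) (hε : 0 < ε)
    (hsep : (s : Set E).Pairwise fun x y => ε ≤ dist x y) :
    (s.card : ℝ) ≤ (1 + 2 * R / ε) ^ finrank ℝ E := by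
  borelize E
  let μ : Measure E := Measure.addHaar
  have hdisj : (s : Set E).PairwiseDisjoint fun x => ball x (ε / 2) := fun x hx y hy hxy =>
    ball_disjoint_ball (by linarith [hsep hx hy hxy])
  have hsub : ⋃ x ∈ s, ball x (ε / 2) ⊆ ball c (R + ε / 2) := iUnion₂_subset fun x hx =>
    ball_subset_ball' (by linarith [mem_closedBall.1 (hs hx)])
  have hvol : (s.card : ℝ≥0∞) * ENNReal.ofReal ((ε / 2) ^ finrank ℝ E) * μ (ball 0 1) ≤
      ENNReal.ofReal ((R + ε / 2) ^ finrank ℝ E) * μ (ball 0 1) := by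
    calc
      _ = μ (⋃ x ∈ s, ball x (ε / 2)) := by
        rw [measure_biUnion_finset hdisj fun x _ => measurableSet_ball]
        simp only [μ.addHaar_ball_of_pos _ (half_pos hε), Finset.sum_const, nsmul_eq_mul, mul_assoc]
      _ ≤ μ (ball c (R + ε / 2)) := measure_mono hsub
      _ = _ := μ.addHaar_ball_of_pos _ (by positivity)
  have hcard := ENNReal.toReal_le_of_le_ofReal (by positivity) <|
    (ENNReal.mul_le_mul_iff_left (measure_ball_pos _ _ zero_lt_one).ne' measure_ball_lt_top.ne).1
      hvol
  rw [ENNReal.toReal_mul, ENNReal.toReal_natCast, ENNReal.toReal_ofReal (by positivity),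
    ← le_div_iff₀ (by positivity), ← div_pow] at hcard
  have hratio : (R + ε / 2) / (ε / 2) = 1 + 2 * R / ε := by field_simp; ring
  rwa [hratio] at hcard

lemma packingNumber_le_floor [FiniteDimensional ℝ E] {A : Set E} {ε : ℝ≥0}
    (hA : A ⊆ closedBall c R) (hR : 0 ≤ R) (hε : 0 < ε) :
    packingNumber ε A ≤ ⌊(1 + 2 * R / ε) ^ finrank ℝ E⌋₊ := by
  refine iSup_le fun C => iSup₂_le fun hCA hsep => le_of_not_gt fun hlt => ?_
  obtain ⟨t, htC, ht⟩ := exists_subset_encard_eq (Order.add_one_le_of_lt hlt)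
  lift t to Finset E using finite_of_encard_eq_coe (by exact_mod_cast ht)
  have hcard := card_le_of_pairwise_le_dist (htC.trans (hCA.trans hA)) hR (NNReal.coe_pos.2 hε)
    fun x hx y hy hxy => (?_ : (ε : ℝ) ≤ dist x y)
  · rw [encard_coe_eq_coe_finsetCard] at ht
    have := Nat.le_floor hcard
    norm_cast at ht
    omega
  · have hlt : (ε : ℝ≥0∞) < edist x y := hsep (htC hx) (htC hy) hxy
    rw [edist_nndist, ENNReal.coe_lt_coe] at hlt
    exact_mod_cast hlt.le

lemma exists_finset_subset_iUnion_closedBall [FiniteDimensional ℝ E] {A : Set E}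
    (hA : A ⊆ closedBall c R) (hR : 0 ≤ R) (hε : 0 < ε) :
    ∃ s : Finset E, (s : Set E) ⊆ A ∧ A ⊆ ⋃ x ∈ s, closedBall x ε ∧
      (s.card : ℝ) ≤ (1 + 2 * R / ε) ^ finrank ℝ E := by
  lift ε to ℝ≥0 using hε.le
  have hle := packingNumber_le_floor hA hR hε
  have htop : packingNumber ε A ≠ ⊤ := ne_top_of_le_ne_top (ENat.natCast_ne_top _) hle
  obtain ⟨s, hs⟩ := (finite_of_encard_le_coe
    ((encard_maximalSeparatedSet htop).trans_le hle)).exists_finset_coe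
  refine ⟨s, hs ▸ maximalSeparatedSet_subset, ?_, ?_⟩
  · simpa [← hs, isCover_iff_subset_iUnion_closedBall] using isCover_maximalSeparatedSet htop
  · rw [← encard_maximalSeparatedSet htop, ← hs, encard_coe_eq_coe_finsetCard,
      Nat.cast_le] at hle
    exact (Nat.cast_le.2 hle).trans (Nat.floor_le (by positivity))

lemma exists_finset_image_closedBall_subset {F : Type*} [NormedAddCommGroup F] [NormedSpace ℝ F]
    [FiniteDimensional ℝ F] (T : E →L[ℝ] F) {L : ℝ} (hT : ‖T‖ ≤ L) (hR : 0 ≤ R) (hε : 0 < ε) :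
    ∃ s : Finset F, T '' closedBall 0 R ⊆ ⋃ w ∈ s, closedBall w ε ∧
      (s.card : ℝ) ≤ (1 + 2 * (L * R) / ε) ^ finrank ℝ T.range := by
  have hL : 0 ≤ L := (norm_nonneg T).trans hT
  obtain ⟨s, -, hcover, hcard⟩ := exists_finset_subset_iUnion_closedBall
    (Subset.refl (closedBall (0 : T.range) (L * R))) (mul_nonneg hL hR) hε
  refine ⟨s.map (Function.Embedding.subtype _), ?_, by simpa using hcard⟩
  rintro _ ⟨v, hv, rfl⟩
  have hTv : (⟨T v, LinearMap.mem_range_self _ v⟩ : T.range) ∈ closedBall 0 (L * R) := by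
    rw [mem_closedBall_zero_iff] at hv ⊢
    exact T.le_of_opNorm_le_of_le hT hv
  obtain ⟨w, hw, hvw⟩ := mem_iUnion₂.1 (hcover hTv)
  exact mem_iUnion₂.2 ⟨w, Finset.mem_map_of_mem _ hw, hvw⟩

end Counting

lemma covering_content_le {k d : ℕ} {R L r θ : ℝ} (hdk : d < k) (hR : 0 ≤ R) (hL : 0 ≤ L)
    (hr : r ∈ Ioc 0 1) (hθ : θ ∈ Ioc 0 1) :
    (1 + 2 * R / r) ^ k * (1 + 2 * L / θ) ^ d * (8 * (θ * r)) ^ k ≤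
      (1 + 2 * R) ^ k * (1 + 2 * L) ^ d * 8 ^ k * θ := by
  obtain ⟨hr₀, hr₁⟩ := hr
  obtain ⟨hθ₀, hθ₁⟩ := hθ
  have hθ_pow : θ ^ k ≤ θ ^ d * θ := pow_le_pow_of_le_one hθ₀.le hθ₁ hdk
  calc
    _ = ((1 + 2 * R / r) * r) ^ k * (1 + 2 * L / θ) ^ d * 8 ^ k * θ ^ k := by
      simp only [mul_pow]
      ring
    _ ≤ ((1 + 2 * R / r) * r) ^ k * (1 + 2 * L / θ) ^ d * 8 ^ k * (θ ^ d * θ) := by gcongr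
    _ = (r + 2 * R) ^ k * (θ + 2 * L) ^ d * 8 ^ k * θ := by
      have hrR : (1 + 2 * R / r) * r = r + 2 * R := by field_simp
      have hθL : (1 + 2 * L / θ) * θ = θ + 2 * L := by field_simp
      rw [hrR, ← hθL, mul_pow _ θ]
      ring
    _ ≤ _ := by gcongr

namespace ContactDifferentiableOn

variable {n : ℕ} {F : E → Heis n} {G : E → E →L[ℝ] Heis n} {S : Set E} {L R θ : ℝ} {c : E} {d : ℕ}

lemma eventually_dK_le (h : ContactDifferentiableOn F G S) (hθ : 0 < θ) :
    ∀ᶠ r in 𝓝[>] 0, ∀ x ∈ S, ∀ w, ∀ y ∈ S, ∀ y' ∈ S, ‖y - x‖ ≤ r → ‖y' - x‖ ≤ r →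
      ‖G x (y - x) - w‖ ≤ θ * r → ‖G x (y' - x) - w‖ ≤ θ * r →
        dK n (F y) (F y') ≤ 8 * (θ * r) := by
  obtain ⟨δ, hδ, hsub⟩ := (uniformity_basis_dist.inf_principal _).eventually_iff.1
    ((h.isLittleO_sub.def hθ).and (h.isLittleO_height.def (sq_pos_of_pos hθ)))
  filter_upwards [Ioo_mem_nhdsGT (half_pos hδ)] with r hr x hx w y hy y' hy' hyx hyx' hw hw'
  have hsub₁ : ∀ z ∈ S, ‖z - x‖ ≤ r → ‖F z - F x - G x (z - x)‖ ≤ θ * r := fun z hz hzx =>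
    (hsub (x := (z, x)) ⟨by
      simpa [dist_eq_norm] using hzx.trans_lt (by linarith [hr.2]), hz, hx⟩).1.trans
      (by dsimp only; gcongr)
  have hyy : ‖y - y'‖ ≤ 2 * r := by
    linarith [norm_sub_le_norm_sub_add_norm_sub y x y', norm_sub_rev x y']
  have hheight := (hsub (x := (y, y')) ⟨by
    simpa [dist_eq_norm] using hyy.trans_lt (by linarith [hr.2]), hy, hy'⟩).2
  have hθr : 0 ≤ θ * r := mul_nonneg hθ.le hr.1.le
  refine (dK_le_of_norm_sub_le (ρ := 4 * (θ * r)) (by positivity) ?_ ?_).trans_eq (by ring)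
  · calc
      ‖F y - F y'‖ = ‖(F y - F x - G x (y - x)) + (G x (y - x) - w) -
          (F y' - F x - G x (y' - x)) - (G x (y' - x) - w)‖ := by congr 1; abel
      _ ≤ ‖F y - F x - G x (y - x)‖ + ‖G x (y - x) - w‖ + ‖F y' - F x - G x (y' - x)‖ +
          ‖G x (y' - x) - w‖ :=
        (norm_sub_le _ _).trans (add_le_add_left ((norm_sub_le _ _).trans
          (add_le_add_left (norm_add_le _ _) _)) _)
      _ ≤ 4 * (θ * r) := by linarith [hsub₁ y hy hyx, hsub₁ y' hy' hyx']
  · calc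
      |height (F y) (F y')| ≤ θ ^ 2 * ‖y - y'‖ ^ 2 := by simpa using hheight
      _ ≤ θ ^ 2 * (2 * r) ^ 2 := by gcongr
      _ ≤ (4 * (θ * r)) ^ 2 := by nlinarith [sq_nonneg (θ * r)]

lemma eventually_exists_finite_cover [FiniteDimensional ℝ E] (h : ContactDifferentiableOn F G S)
    (hS : S ⊆ closedBall c R) (hR : 0 ≤ R) (hL : ∀ x ∈ S, ‖G x‖ ≤ L) (hL₀ : 0 ≤ L)
    (hd : ∀ x ∈ S, finrank ℝ (G x).range ≤ d) (hθ : 0 < θ) :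
    ∀ᶠ r in 𝓝[>] 0, ∃ 𝒰 : Finset (Set (Heis n)), F '' S ⊆ ⋃ U ∈ 𝒰, U ∧
      (∀ U ∈ 𝒰, ∀ p ∈ U, ∀ q ∈ U, dK n p q ≤ 8 * (θ * r)) ∧
      (𝒰.card : ℝ) ≤ (1 + 2 * R / r) ^ finrank ℝ E * (1 + 2 * L / θ) ^ d := by
  classical
  filter_upwards [h.eventually_dK_le hθ, self_mem_nhdsWithin] with r hdK (hr : 0 < r)
  obtain ⟨s, hsS, hscover, hscard⟩ := exists_finset_subset_iUnion_closedBall hS hR hr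
  choose! t htcover htcard using fun x (hx : x ∈ S) =>
    exists_finset_image_closedBall_subset (G x) (hL x hx) hr.le (mul_pos hθ hr)
  let piece (x : E) (w : Heis n) : Set (Heis n) :=
    F '' {y ∈ S | ‖y - x‖ ≤ r ∧ ‖G x (y - x) - w‖ ≤ θ * r}
  have htcard' : ∀ x ∈ s, (t x).card ≤ ⌊(1 + 2 * L / θ) ^ d⌋₊ := fun x hx => by
    refine Nat.le_floor ((htcard x (hsS hx)).trans ?_)
    rw [mul_comm θ, mul_div_assoc, mul_comm L, mul_div_mul_left _ _ hr.ne', ← mul_div_assoc]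
    exact pow_le_pow_right₀ (le_add_of_nonneg_right (by positivity)) (hd x (hsS hx))
  refine ⟨s.biUnion fun x => (t x).image (piece x), ?_, ?_, ?_⟩
  · rintro _ ⟨y, hy, rfl⟩
    obtain ⟨x, hx, hyx⟩ := mem_iUnion₂.1 (hscover hy)
    rw [mem_closedBall, dist_eq_norm] at hyx
    obtain ⟨w, hw, hyw⟩ := mem_iUnion₂.1
      (htcover x (hsS hx) (mem_image_of_mem _ (mem_closedBall_zero_iff.2 hyx)))
    exact mem_iUnion₂.2 ⟨piece x w,
      Finset.mem_biUnion.2 ⟨x, hx, Finset.mem_image_of_mem _ hw⟩,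
      mem_image_of_mem _ ⟨hy, hyx, by simpa [dist_eq_norm] using hyw⟩⟩
  · simp only [Finset.mem_biUnion, Finset.mem_image]
    rintro _ ⟨x, hx, w, -, rfl⟩ _ ⟨y, ⟨hy, hyx, hyw⟩, rfl⟩ _ ⟨y', ⟨hy', hyx', hyw'⟩, rfl⟩
    exact hdK x (hsS hx) w y hy y' hy' hyx hyx' hyw hyw'
  · have hcard := Finset.card_biUnion_le_card_mul s (fun x => (t x).image (piece x)) _
      fun x hx => Finset.card_image_le.trans (htcard' x hx)
    calc
      _ ≤ (s.card : ℝ) * ⌊(1 + 2 * L / θ) ^ d⌋₊ := by exact_mod_cast hcard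
      _ ≤ _ := by
        gcongr
        exact Nat.floor_le (by positivity)

lemma isHausdorffNullK_image [FiniteDimensional ℝ E] (h : ContactDifferentiableOn F G S)
    (hS : Bornology.IsBounded S) (hL : ∀ x ∈ S, ‖G x‖ ≤ L)
    (hd : ∀ x ∈ S, finrank ℝ (G x).range ≤ d) (hdE : d < finrank ℝ E) :
    IsHausdorffNullK n (finrank ℝ E) (F '' S) := by
  have hk : finrank ℝ E ≠ 0 := (Nat.zero_le d).trans_lt hdE |>.ne'
  rcases S.eq_empty_or_nonempty with rfl | ⟨x₀, hx₀⟩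
  · exact fun ε hε => ⟨fun _ => ∅, by simp, by simpa [kDiam_empty, hk] using hε⟩
  have hL₀ : 0 ≤ L := (norm_nonneg _).trans (hL x₀ hx₀)
  obtain ⟨R, hSR⟩ := hS.subset_closedBall x₀
  have hR : 0 ≤ R := dist_nonneg.trans (hSR hx₀)
  refine isHausdorffNullK_of_finite_cover hk fun ε hε => ?_
  set K : ℝ := (1 + 2 * R) ^ finrank ℝ E * (1 + 2 * L) ^ d * 8 ^ finrank ℝ E
  have hK₀ : 0 < K := by positivity
  obtain ⟨θ, hθ₀, hθ⟩ : ∃ θ, 0 < θ ∧ θ ≤ min 1 (ε / K) := ⟨_, by positivity, le_rfl⟩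
  obtain ⟨r, ⟨𝒰, hcover, hdK, hcard⟩, hr⟩ :=
    ((h.eventually_exists_finite_cover hSR hR hL hL₀ hd hθ₀).and
      (Ioc_mem_nhdsGT zero_lt_one)).exists
  have hr₀ : 0 ≤ r := hr.1.le
  refine ⟨𝒰, 8 * (θ * r), by positivity, hcover, hdK, ?_⟩
  calc
    𝒰.card * (8 * (θ * r)) ^ finrank ℝ E
      ≤ (1 + 2 * R / r) ^ finrank ℝ E * (1 + 2 * L / θ) ^ d * (8 * (θ * r)) ^ finrank ℝ E := by
        gcongr
    _ ≤ K * θ := covering_content_le hdE hR hL₀ hr ⟨hθ₀, hθ.trans (min_le_left _ _)⟩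
    _ ≤ K * (ε / K) := by gcongr; exact hθ.trans (min_le_right _ _)
    _ = ε := mul_div_cancel₀ ε hK₀.ne'

end ContactDifferentiableOn

end Covering

section Egorov

variable {α : Type*} [MeasurableSpace α] {μ : Measure α} {s : Set α}

lemma exists_seq_tendstoUniformlyOn_of_ae_tendsto {β : Type*} [PseudoEMetricSpace β]
    {f : ℕ → α → β} {g : α → β} (hf : ∀ m, StronglyMeasurable (f m)) (hg : StronglyMeasurable g)
    (hs : MeasurableSet s) (hμs : μ s ≠ ∞)
    (hlim : ∀ᵐ a ∂μ, a ∈ s → Tendsto (fun m => f m a) atTop (𝓝 (g a))) :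
    ∃ A : ℕ → Set α, (∀ j, A j ⊆ s) ∧ (∀ᵐ a ∂μ, a ∈ s → ∃ j, a ∈ A j) ∧
      ∀ j, TendstoUniformlyOn f g atTop (A j) := by
  choose t _ _ htμ htlim using fun j : ℕ =>
    tendstoUniformlyOn_of_ae_tendsto hf hg hs hμs hlim (Nat.one_div_pos_of_nat (α := ℝ) (n := j))
  have hnull : μ (⋂ j, t j) = 0 := by
    have hzero : Tendsto (fun j : ℕ => ENNReal.ofReal (1 / ((j : ℝ) + 1))) atTop (𝓝 0) := by
      simpa using ENNReal.tendsto_ofReal (tendsto_one_div_add_atTop_nhds_zero_nat (𝕜 := ℝ))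
    exact le_antisymm (ge_of_tendsto' hzero fun j =>
      (measure_mono (iInter_subset t j)).trans (htμ j)) zero_le
  refine ⟨fun j => s \ t j, fun j => sdiff_subset, ?_, htlim⟩
  filter_upwards [measure_eq_zero_iff_ae_notMem.1 hnull] with a ha has
  obtain ⟨j, hj⟩ := not_forall.1 (mt mem_iInter.2 ha)
  exact ⟨j, has, hj⟩

-- Egorov's theorem needs an extended metric on the target, hence the truncation of `q` at `1`.
lemma exists_seq_eventually_le_of_ae_tendsto_zero {q : ℕ → α → ℝ≥0∞} (hq : ∀ m, Measurable (q m))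
    (hs : MeasurableSet s) (hμs : μ s ≠ ∞)
    (hlim : ∀ᵐ a ∂μ, a ∈ s → Tendsto (fun m => q m a) atTop (𝓝 0)) :
    ∃ A : ℕ → Set α, (∀ j, A j ⊆ s) ∧ (∀ᵐ a ∂μ, a ∈ s → ∃ j, a ∈ A j) ∧
      ∀ j, ∀ θ ≠ 0, ∀ᶠ m in atTop, ∀ a ∈ A j, q m a ≤ θ := by
  have hfin (x : ℝ≥0∞) : min x 1 ≠ ∞ := ne_top_of_le_ne_top ENNReal.one_ne_top (min_le_right x 1)
  obtain ⟨A, hAs, hcover, hA⟩ := exists_seq_tendstoUniformlyOn_of_ae_tendsto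
    (f := fun m a => (min (q m a) 1).toReal) (g := fun _ => 0)
    (fun m => ((hq m).min measurable_const).ennreal_toReal.stronglyMeasurable)
    stronglyMeasurable_const hs hμs (by
      filter_upwards [hlim] with a ha has
      simpa [Function.comp_def] using
        (ENNReal.tendsto_toReal (hfin 0)).comp ((ha has).min tendsto_const_nhds))
  refine ⟨A, hAs, hcover, fun j θ hθ => ?_⟩
  have hpos : 0 < (min θ 1).toReal := ENNReal.toReal_pos (by simp [hθ]) (hfin θ)
  filter_upwards [Metric.tendstoUniformlyOn_iff.1 (hA j) _ hpos] with m hm a ha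
  have hlt : min (q m a) 1 < min θ 1 := by
    have hdist := hm a ha
    rwa [dist_zero_left, Real.norm_of_nonneg ENNReal.toReal_nonneg,
      ENNReal.toReal_lt_toReal (hfin _) (hfin _)] at hdist
  rcases min_lt_iff.1 hlt with hq_lt | hone_lt
  · exact hq_lt.le.trans (min_le_left _ _)
  · exact absurd hone_lt (min_le_right _ _).not_gt

end Egorov

section Decomposition

variable {E : Type*} [NormedAddCommGroup E] [NormedSpace ℝ E] [FiniteDimensional ℝ E]
  [MeasurableSpace E] [BorelSpace E] {μ : Measure E} [μ.IsAddHaarMeasure] {n : ℕ}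
  {F : E → Heis n} {G : E → E →L[ℝ] Heis n} {S U V : Set E} {r : ℝ}

lemma exists_ae_cover_contactDifferentiableOn (hG : StronglyMeasurable G) (hGi : Integrable G μ)
    (hV : MeasurableSet V) (hμV : μ V ≠ ∞) (hr : 0 < r)
    (hseg : ∀ᵐ a ∂μ, a ∈ V → ∀ᵐ v ∂μ, ‖v‖ < r → IsHorizontalSegment F G a v) :
    ∃ S : ℕ × ℕ → Set E, (∀ᵐ a ∂μ, a ∈ V → ∃ p, a ∈ S p) ∧
      ∀ p, S p ⊆ V ∧ (∀ a ∈ S p, ‖G a‖ ≤ p.2) ∧ ContactDifferentiableOn F G (S p) := by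
  have hscale : Tendsto (fun m : ℕ => (1 / 2 : ℝ) ^ m) atTop (𝓝[>] 0) :=
    tendsto_pow_atTop_nhdsWithin_zero_of_lt_one (by norm_num) (by norm_num)
  obtain ⟨A, hAV, hAcover, hA⟩ := exists_seq_eventually_le_of_ae_tendsto_zero
    (fun m => measurable_meanSegmentOsc (μ := μ) hG ((1 / 2 : ℝ) ^ m)) hV hμV
    ((ae_tendsto_meanSegmentOsc hG hGi).mono fun a ha _ => ha.comp hscale)
  refine ⟨fun p => {a ∈ A p.1 | ‖G a‖ ≤ p.2 ∧
    ∀ᵐ v ∂μ, ‖v‖ < r → IsHorizontalSegment F G a v}, ?_, fun p => ⟨?_, ?_, ?_⟩⟩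
  · filter_upwards [hseg, hAcover] with a ha haA haV
    obtain ⟨j, hj⟩ := haA haV
    exact ⟨(j, ⌈‖G a‖⌉₊), hj, Nat.le_ceil _, ha haV⟩
  · exact fun a ha => hAV _ ha.1
  · exact fun a ha => ha.2.1
  · exact contactDifferentiableOn_of_meanSegmentOsc_le hG hr (fun a ha => ha.2.1)
      (fun a ha => ha.2.2) fun θ hθ => eventually_forall_meanSegmentOsc_le
        (fun θ' hθ' => (hA p.1 θ' hθ').mono fun m hm a ha => hm a ha.1) hθ

lemma ContactDifferentiableOn.exists_ae_mem_isHausdorffNullK_image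
    (h : ContactDifferentiableOn F G S) (hS : Bornology.IsBounded S) {L : ℝ}
    (hL : ∀ x ∈ S, ‖G x‖ ≤ L) (hn : n < finrank ℝ E)
    (hcontact : ∀ᵐ x ∂μ, x ∈ S → ∀ v, G x v ∈ kerAlpha n (F x)) :
    ∃ T, (∀ᵐ x ∂μ, x ∈ S → x ∈ T) ∧ IsHausdorffNullK n (finrank ℝ E) (F '' T) := by
  refine ⟨{x ∈ S | (∀ v, G x v ∈ kerAlpha n (F x)) ∧
    Tendsto (fun ρ => μ (S ∩ closedBall x ρ) / μ (closedBall x ρ)) (𝓝[>] 0) (𝓝 1)}, ?_, ?_⟩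
  · filter_upwards [hcontact,
      ae_imp_of_ae_restrict (Besicovitch.ae_tendsto_measure_inter_div μ S)] with x hx hdens hxS
    exact ⟨hxS, hx hxS, hdens hxS⟩
  · exact (h.mono (sep_subset _ _)).isHausdorffNullK_image (hS.subset (sep_subset _ _))
      (fun x hx => hL x hx.1) (fun x hx => h.finrank_range_le hx.1 hx.2.2 hx.2.1) hn

theorem HasWeakFDerivOn.exists_ae_mem_isHausdorffNullK_image (h : HasWeakFDerivOn F G U μ)
    (hF : StronglyMeasurable F) (hFi : Integrable F μ) (hG : StronglyMeasurable G)
    (hGi : Integrable G μ) (hcontact : ∀ᵐ x ∂μ, x ∈ U → ∀ v, G x v ∈ kerAlpha n (F x))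
    (hn : n < finrank ℝ E) (hV : IsOpen V) (hVb : Bornology.IsBounded V) (hr : 0 < r)
    (hVU : thickening r V ⊆ U) :
    ∃ T, (∀ᵐ x ∂μ, x ∈ V → x ∈ T) ∧ IsHausdorffNullK n (finrank ℝ E) (F '' T) := by
  obtain ⟨S, hcover, hS⟩ := exists_ae_cover_contactDifferentiableOn hG hGi hV.measurableSet
    hVb.measure_lt_top.ne hr (h.ae_ae_isHorizontalSegment hF hFi hG hGi hcontact hV hVU)
  have hSU (p) : S p ⊆ U := (hS p).1.trans ((self_subset_thickening hr V).trans hVU)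
  choose T hT hnull using fun p => (hS p).2.2.exists_ae_mem_isHausdorffNullK_image
    (hVb.subset (hS p).1) (hS p).2.1 hn (hcontact.mono fun x hx hxS => hx (hSU p hxS))
  refine ⟨⋃ p, T p, ?_, ?_⟩
  · filter_upwards [hcover, ae_all_iff.2 hT] with x hx hxT hxV
    obtain ⟨p, hp⟩ := hx hxV
    exact mem_iUnion.2 ⟨p, hxT p hp⟩
  · rw [image_iUnion]
    exact isHausdorffNullK_iUnion (Nat.zero_le n |>.trans_lt hn).ne' hnull

end Decomposition

section TestDirections

lemma integrable_smul_of_locallyIntegrableOn {X W : Type*} [TopologicalSpace X]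
    [MeasurableSpace X] [OpensMeasurableSpace X] {μ : Measure X} [NormedAddCommGroup W]
    [NormedSpace ℝ W] {Ω : Set X} {g : X → W} {ψ : X → ℝ} (hg : LocallyIntegrableOn g Ω μ)
    (hψ : Continuous ψ) (hψc : HasCompactSupport ψ) (hψΩ : tsupport ψ ⊆ Ω) :
    Integrable (fun x => ψ x • g x) μ := by
  obtain ⟨C, hC⟩ := hψc.exists_bound_of_continuous hψ
  have hgψ : IntegrableOn g (tsupport ψ) μ := hg.integrableOn_compact_subset hψΩ hψc
  refine (integrableOn_iff_integrable_of_support_subset ?_).1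
    (hgψ.bdd_smul C hψ.aestronglyMeasurable (ae_of_all _ hC))
  exact (Function.support_smul_subset_left ψ g).trans (subset_tsupport ψ)

variable {E W : Type*} [NormedAddCommGroup E] [NormedSpace ℝ E] [MeasurableSpace E]
  [OpensMeasurableSpace E] {μ : Measure E} [NormedAddCommGroup W] [NormedSpace ℝ W]
  {f : E → W} {Df : E → E →L[ℝ] W} {Ω : Set E}

lemma hasWeakFDerivOn_of_span_eq_top {s : Set E} (hs : Submodule.span ℝ s = ⊤)
    (hf : LocallyIntegrableOn f Ω μ) (hDf : LocallyIntegrableOn Df Ω μ)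
    (h : ∀ φ : E → ℝ, ContDiff ℝ (⊤ : ℕ∞) φ → HasCompactSupport φ → tsupport φ ⊆ Ω →
      ∀ v ∈ s, ∫ x, fderiv ℝ φ x v • f x ∂μ = - ∫ x, φ x • Df x v ∂μ) :
    HasWeakFDerivOn f Df Ω μ := by
  intro φ hφ hφc hφΩ v
  have hleft (v : E) : Integrable (fun x => fderiv ℝ φ x v • f x) μ :=
    integrable_smul_of_locallyIntegrableOn hf
      ((hφ.continuous_fderiv (by simp)).clm_apply continuous_const) (hφc.fderiv_apply ℝ v)
      ((tsupport_fderiv_apply_subset ℝ v).trans hφΩ)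
  have hright (v : E) : Integrable (fun x => φ x • Df x v) μ :=
    (integrable_smul_of_locallyIntegrableOn hDf hφ.continuous hφc
      hφΩ).apply_continuousLinearMap v
  induction (hs ▸ Submodule.mem_top : v ∈ Submodule.span ℝ s) using Submodule.span_induction with
  | mem v hv => exact h φ hφ hφc hφΩ v hv
  | zero => simp
  | add v w _ _ hv hw =>
    simp only [map_add, add_smul, smul_add]
    rw [integral_add (hleft v) (hleft w), integral_add (hright v) (hright w), hv, hw, neg_add]
  | smul c v _ hv =>
    simp only [map_smul, smul_assoc, smul_comm _ c]
    rw [integral_smul, integral_smul, hv, smul_neg]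

end TestDirections

lemma IsWeakFDerivOn.hasWeakFDerivOn {k m : ℕ} {Ω : Set (EuclideanSpace ℝ (Fin k))}
    {f : EuclideanSpace ℝ (Fin k) → EuclideanSpace ℝ (Fin m)}
    {Df : EuclideanSpace ℝ (Fin k) → EuclideanSpace ℝ (Fin k) →L[ℝ] EuclideanSpace ℝ (Fin m)}
    (h : IsWeakFDerivOn Ω f Df) (hf : LocallyIntegrableOn f Ω)
    (hDf : LocallyIntegrableOn Df Ω) : HasWeakFDerivOn f Df Ω volume := by
  have hspan := (EuclideanSpace.basisFun (Fin k) ℝ).toBasis.span_eq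
  refine hasWeakFDerivOn_of_span_eq_top hspan hf hDf ?_
  rintro φ hφ hφc hφΩ _ ⟨i, rfl⟩
  have hi := h φ hφ hφc hφΩ i
  rw [setIntegral_eq_integral_of_forall_compl_eq_zero fun x hx => ?_,
    setIntegral_eq_integral_of_forall_compl_eq_zero fun x hx => ?_] at hi
  · simpa using hi
  · simp [image_eq_zero_of_notMem_tsupport fun hxφ => hx (hφΩ hxφ)]
  · simp [fderiv_of_notMem_tsupport (𝕜 := ℝ) fun hxφ => hx (hφΩ hxφ)]

section Localization

variable {E : Type*} [NormedAddCommGroup E] [NormedSpace ℝ E] [MeasurableSpace E] {μ : Measure E}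

lemma exists_stronglyMeasurable_integrable_ae_eq_on {α W : Type*} [MeasurableSpace α]
    {μ : Measure α} [NormedAddCommGroup W] {f : α → W} {K : Set α} (hK : MeasurableSet K)
    (hf : IntegrableOn f K μ) :
    ∃ F : α → W, StronglyMeasurable F ∧ Integrable F μ ∧ ∀ᵐ x ∂μ, x ∈ K → F x = f x := by
  have hmk := hf.1.ae_eq_mk
  refine ⟨K.indicator (hf.1.mk f), hf.1.stronglyMeasurable_mk.indicator hK,
    (integrable_indicator_iff hK).2 (hf.congr hmk), ?_⟩
  filter_upwards [(ae_restrict_iff' hK).1 hmk] with x hx hxK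
  rw [indicator_of_mem hxK, hx hxK]

lemma HasWeakFDerivOn.congr_ae {W : Type*} [NormedAddCommGroup W] [NormedSpace ℝ W]
    {f F : E → W} {g G : E → E →L[ℝ] W} {U Ω : Set E} (h : HasWeakFDerivOn f g Ω μ) (hU : U ⊆ Ω)
    (hF : ∀ᵐ x ∂μ, x ∈ U → F x = f x) (hG : ∀ᵐ x ∂μ, x ∈ U → G x = g x) :
    HasWeakFDerivOn F G U μ := by
  intro φ hφ hφc hφU v
  have hleft : ∫ x, fderiv ℝ φ x v • F x ∂μ = ∫ x, fderiv ℝ φ x v • f x ∂μ := by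
    refine integral_congr_ae (hF.mono fun x hx => ?_)
    by_cases hxU : x ∈ U
    · simp only [hx hxU]
    · simp [fderiv_of_notMem_tsupport (𝕜 := ℝ) fun hxφ => hxU (hφU hxφ)]
  have hright : ∫ x, φ x • G x v ∂μ = ∫ x, φ x • g x v ∂μ := by
    refine integral_congr_ae (hG.mono fun x hx => ?_)
    by_cases hxU : x ∈ U
    · simp only [hx hxU]
    · simp [image_eq_zero_of_notMem_tsupport fun hxφ => hxU (hφU hxφ)]
  rw [hleft, hright, h φ hφ hφc (hφU.trans hU) v]

variable [FiniteDimensional ℝ E] [BorelSpace E] [μ.IsAddHaarMeasure] {n : ℕ}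
  {f : E → Heis n} {Df : E → E →L[ℝ] Heis n} {U V Ω : Set E} {r R : ℝ} {c : E}

lemma HasWeakFDerivOn.exists_ae_mem_isHausdorffNullK_image_of_integrableOn
    (h : HasWeakFDerivOn f Df U μ) (hU : MeasurableSet U)
    (hf : IntegrableOn f U μ) (hDf : IntegrableOn Df U μ)
    (hcontact : ∀ᵐ x ∂μ, x ∈ U → ∀ v, Df x v ∈ kerAlpha n (f x))
    (hn : n < finrank ℝ E) (hV : IsOpen V) (hVb : Bornology.IsBounded V) (hr : 0 < r)
    (hVU : thickening r V ⊆ U) :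
    ∃ T, (∀ᵐ x ∂μ, x ∈ V → x ∈ T) ∧ IsHausdorffNullK n (finrank ℝ E) (f '' T) := by
  obtain ⟨F, hFm, hFi, hF⟩ := exists_stronglyMeasurable_integrable_ae_eq_on hU hf
  obtain ⟨G, hGm, hGi, hG⟩ := exists_stronglyMeasurable_integrable_ae_eq_on hU hDf
  have hcontact' : ∀ᵐ x ∂μ, x ∈ U → ∀ v, G x v ∈ kerAlpha n (F x) := by
    filter_upwards [hF, hG, hcontact] with x hFx hGx hx hxU
    rw [hFx hxU, hGx hxU]
    exact hx hxU
  obtain ⟨T, hT, hnull⟩ := (h.congr_ae Subset.rfl hF hG).exists_ae_mem_isHausdorffNullK_image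
    hFm hFi hGm hGi hcontact' hn hV hVb hr hVU
  refine ⟨{x ∈ T | F x = f x}, ?_, hnull.mono ?_⟩
  · filter_upwards [hT, hF] with x hxT hFx hxV
    exact ⟨hxT hxV, hFx (hVU (self_subset_thickening hr V hxV))⟩
  · rintro _ ⟨x, ⟨hxT, hFx⟩, rfl⟩
    exact ⟨x, hxT, hFx⟩

lemma HasWeakFDerivOn.isHausdorffNullK_image_ball (h : HasWeakFDerivOn f Df Ω μ)
    (hf : LocallyIntegrableOn f Ω μ) (hDf : LocallyIntegrableOn Df Ω μ)
    (hcontact : ∀ᵐ x ∂μ, x ∈ Ω → ∀ v, Df x v ∈ kerAlpha n (f x))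
    (hLusin : ∀ Z ⊆ Ω, μ Z = 0 → IsHausdorffNullK n (finrank ℝ E) (f '' Z))
    (hn : n < finrank ℝ E) (hR : 0 < R) (hc : closedBall c (2 * R) ⊆ Ω) :
    IsHausdorffNullK n (finrank ℝ E) (f '' ball c R) := by
  have hUΩ : ball c (2 * R) ⊆ Ω := ball_subset_closedBall.trans hc
  have hVU : thickening R (ball c R) ⊆ ball c (2 * R) := by
    rw [two_mul]
    exact Metric.thickening_ball c R R
  have hcompact : IsCompact (closedBall c (2 * R)) := isCompact_closedBall c _
  obtain ⟨T, hT, hnull⟩ := HasWeakFDerivOn.exists_ae_mem_isHausdorffNullK_image_of_integrableOn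
    (h.congr_ae hUΩ (by simp) (by simp)) measurableSet_ball
    ((hf.integrableOn_compact_subset hc hcompact).mono_set ball_subset_closedBall)
    ((hDf.integrableOn_compact_subset hc hcompact).mono_set ball_subset_closedBall)
    (hcontact.mono fun x hx hxU => hx (hUΩ hxU)) hn isOpen_ball isBounded_ball hR hVU
  have hVΩ : ball c R ⊆ Ω := (self_subset_thickening hR _).trans (hVU.trans hUΩ)
  have hnull' : IsHausdorffNullK n (finrank ℝ E) (f '' (ball c R \ T)) :=
    hLusin _ (sdiff_subset.trans hVΩ) (ae_le_set.1 hT)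
  refine (hnull.union (Nat.zero_le n |>.trans_lt hn).ne' hnull').mono ?_
  rw [← image_union, union_sdiff_self]
  exact image_mono subset_union_right

theorem image_null_of_weak_contact_lusin_general (hn : n < finrank ℝ E) (hΩ : IsOpen Ω)
    (hf : LocallyIntegrableOn f Ω μ) (hDf : LocallyIntegrableOn Df Ω μ)
    (hweak : HasWeakFDerivOn f Df Ω μ)
    (hcontact : ∀ᵐ x ∂μ, x ∈ Ω → ∀ v, Df x v ∈ kerAlpha n (f x))
    (hLusin : ∀ Z ⊆ Ω, μ Z = 0 → IsHausdorffNullK n (finrank ℝ E) (f '' Z)) :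
    IsHausdorffNullK n (finrank ℝ E) (f '' Ω) := by
  have hradius : ∀ c ∈ Ω, ∃ R > 0, closedBall c (2 * R) ⊆ Ω := fun c hc => by
    obtain ⟨r, hr, hrΩ⟩ := nhds_basis_closedBall.mem_iff.1 (hΩ.mem_nhds hc)
    exact ⟨r / 2, half_pos hr, by rwa [mul_div_cancel₀ r two_ne_zero]⟩
  choose! R hR hRΩ using hradius
  obtain ⟨t, htΩ, ht, hcover⟩ := TopologicalSpace.countable_cover_nhdsWithin (s := Ω)
    (f := fun c => ball c (R c)) fun c hc => mem_nhdsWithin_of_mem_nhds (ball_mem_nhds c (hR c hc))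
  have := ht.to_subtype
  have hnull (c : t) : IsHausdorffNullK n (finrank ℝ E) (f '' ball c (R c)) :=
    hweak.isHausdorffNullK_image_ball hf hDf hcontact hLusin hn (hR c (htΩ c.2)) (hRΩ c (htΩ c.2))
  refine (isHausdorffNullK_iUnion (Nat.zero_le n |>.trans_lt hn).ne' hnull).mono ?_
  rw [← image_iUnion, iUnion_coe_set]
  exact image_mono hcover

end Localization

/-- If `k > n ≥ 1`, `Ω ⊆ ℝ^k` is open, `f ∈ W^{1,1}_loc(Ω; ℝ^{2n+1})`
satisfies the weak contact equation and the Lusin condition (Lebesgue-null sets are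
mapped to `ℋ^k_{d_K}`-null sets), then `f(Ω)` is `ℋ^k_{d_K}`-null. -/
theorem image_null_of_weak_contact_lusin (n k : ℕ) (hn : 0 < n) (hk : n < k)
    (Ω : Set (EuclideanSpace ℝ (Fin k))) (hΩ : IsOpen Ω)
    (f : EuclideanSpace ℝ (Fin k) → Heis n)
    (Df : EuclideanSpace ℝ (Fin k) → (EuclideanSpace ℝ (Fin k) →L[ℝ] Heis n))
    (hf : LocallyIntegrableOn f Ω)
    (hDf : LocallyIntegrableOn Df Ω)
    (hweak : IsWeakFDerivOn Ω f Df)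
    (hcontact : ∀ᵐ x, x ∈ Ω → ∀ v, Df x v ∈ kerAlpha n (f x))
    (hLusin : ∀ Z : Set (EuclideanSpace ℝ (Fin k)), Z ⊆ Ω → volume Z = 0 →
      IsHausdorffNullK n k (f '' Z)) :
    IsHausdorffNullK n k (f '' Ω) := by
  have hdim : finrank ℝ (EuclideanSpace ℝ (Fin k)) = k := finrank_euclideanSpace_fin
  simpa only [hdim] using image_null_of_weak_contact_lusin_general (hdim.symm ▸ hk) hΩ hf hDf
    (hweak.hasWeakFDerivOn hf hDf) hcontact (by simpa only [hdim] using hLusin)
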